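/- For every permutation σ ∈ S₅, every connected component of the set BL_σ ⊂ Lo¹₅ is contractible. -/

import Mathlib

open Matrix

/-- The group `Lo¹_m` of real lower triangular `m × m` matrices with
all diagonal entries equal to `1`, viewed as a subset of the matrix space. -/
def Lo1 (m : ℕ) : Set (Matrix (Fin m) (Fin m) ℝ) :=
  {L | (∀ i, L i i = 1) ∧ ∀ i j : Fin m, i < j → L i j = 0}

/-- The set of invertible real upper triangular `m × m` matrices. -/
def UpInv (m : ℕ) : Set (Matrix (Fin m) (Fin m) ℝ) :=
  {U | (∀ i j : Fin m, j < i → U i j = 0) ∧ IsUnit U.det}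

/-- The permutation matrix of `σ`, with `(P_σ)_{i, σ(i)} = 1` and `0` otherwise. -/
def permMat (m : ℕ) (σ : Equiv.Perm (Fin m)) : Matrix (Fin m) (Fin m) ℝ :=
  fun i j => if σ i = j then 1 else 0

/-- The Bruhat cell `Bru_σ^GL = { U₀ P_σ U₁ : U₀, U₁ upper triangular invertible }`. -/
def Bru (m : ℕ) (σ : Equiv.Perm (Fin m)) : Set (Matrix (Fin m) (Fin m) ℝ) :=
  {M | ∃ U₀ ∈ UpInv m, ∃ U₁ ∈ UpInv m, M = U₀ * permMat m σ * U₁}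

/-- `BL_σ = Lo¹ ∩ Bru_σ^GL`. -/
def BL (m : ℕ) (σ : Equiv.Perm (Fin m)) : Set (Matrix (Fin m) (Fin m) ℝ) :=
  Lo1 m ∩ Bru m σ

/-!
A space whose identity is homotopic to a locally constant map has contractible components, and this
property passes to homotopy retracts. The cell `BL m w` is homotopy equivalent to the space of
matrices in the inversion pattern of `w` with nonvanishing leading principal minors. A pivot in the
upper left `2 × 2` corner of such a pattern is eliminated by a Schur complement, which lowers `m`;
up to inversion and conjugation by the order reversal, the permutations in `S₅` without such a pivot
have last two values `0` and `1`. The first two columns are then read as complex numbers, and the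
minors become oriented areas. Consecutive vectors of a chain issuing from a fixed vector must be
independent, which in logarithmic coordinates describes a disjoint union of open convex sets; the
remaining variables are eliminated through the equations in which they are linear.
-/

section HomotopyDiscrete

open Set Topology Filter unitInterval

/-- A space is *homotopy discrete* if its identity is homotopic to a locally constant map. Up to
homotopy it is then a discrete space; unlike contractibility of the components, the property passes
to homotopy retracts and can be checked on the pieces of a clopen partition. -/
def HomotopyDiscrete (X : Type*) [TopologicalSpace X] : Prop :=
  ∃ f : C(X, X), IsLocallyConstant f ∧ (ContinuousMap.id X).Homotopic f

variable {X Y : Type*} [TopologicalSpace X] [TopologicalSpace Y]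

theorem HomotopyDiscrete.contractibleSpace_connectedComponent (h : HomotopyDiscrete X) (x : X) :
    ContractibleSpace (connectedComponent x) := by
  obtain ⟨f, hf, ⟨H⟩⟩ := h
  have hmem (y : connectedComponent x) (t : I) : H (t, y) ∈ connectedComponent x := by
    have hpath : IsPreconnected (range fun t : I ↦ H (t, y)) := isPreconnected_range (by fun_prop)
    exact (connectedComponent_eq y.2).ge
      (hpath.subset_connectedComponent ⟨0, H.apply_zero y⟩ ⟨t, rfl⟩)
  have hconst (y : connectedComponent x) : f y = f x :=
    hf.apply_eq_of_isPreconnected isPreconnected_connectedComponent y.2 mem_connectedComponent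
  have hfx : f x ∈ connectedComponent x := H.apply_one x ▸ hmem ⟨x, mem_connectedComponent⟩ 1
  rw [contractible_iff_id_nullhomotopic]
  exact ⟨⟨f x, hfx⟩,
    ⟨{ toFun := fun p ↦ ⟨H (p.1, p.2), hmem p.2 p.1⟩
       map_zero_left := fun y ↦ Subtype.ext (H.apply_zero y)
       map_one_left := fun y ↦ Subtype.ext ((H.apply_one y).trans (hconst y)) }⟩⟩

theorem HomotopyDiscrete.of_homotopic_id (h : HomotopyDiscrete Y) (s : C(X, Y)) (r : C(Y, X))
    (hrs : (ContinuousMap.id X).Homotopic (r.comp s)) : HomotopyDiscrete X := by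
  obtain ⟨f, hf, hidf⟩ := h
  refine ⟨r.comp (f.comp s), (hf.comp_continuous s.continuous).comp r, hrs.trans ?_⟩
  exact .comp (.refl r) (.comp hidf (.refl s))

theorem HomotopyDiscrete.of_leftInverse (h : HomotopyDiscrete Y) (s : C(X, Y)) (r : C(Y, X))
    (hrs : Function.LeftInverse r s) : HomotopyDiscrete X :=
  h.of_homotopic_id s r (by rw [show r.comp s = .id X from ContinuousMap.ext hrs])

theorem HomotopyDiscrete.of_retract {S : Set X} {T : Set Y} (h : HomotopyDiscrete T)
    (s : X → Y) (r : Y → X) (hs : ContinuousOn s S) (hr : ContinuousOn r T)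
    (hST : MapsTo s S T) (hTS : MapsTo r T S) (hrs : LeftInvOn r s S) : HomotopyDiscrete S :=
  h.of_leftInverse ⟨hST.restrict, hs.mapsToRestrict hST⟩ ⟨hTS.restrict, hr.mapsToRestrict hTS⟩
    fun x ↦ Subtype.ext (hrs x.2)

theorem HomotopyDiscrete.congr_set {S T : Set X} (h : HomotopyDiscrete S)
    (hST : ∀ x, x ∈ T ↔ x ∈ S) : HomotopyDiscrete T :=
  Set.ext hST ▸ h

theorem HomotopyDiscrete.of_contractibleSpace [ContractibleSpace X] : HomotopyDiscrete X := by
  obtain ⟨x, hx⟩ := id_nullhomotopic X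
  exact ⟨.const X x, .const x, hx⟩

theorem HomotopyDiscrete.of_isEmpty [IsEmpty X] : HomotopyDiscrete X :=
  ⟨.id X, .of_constant _ isEmptyElim, .refl _⟩

theorem HomotopyDiscrete.of_convex {E : Type*} [AddCommGroup E] [Module ℝ E] [TopologicalSpace E]
    [ContinuousAdd E] [ContinuousSMul ℝ E] {K : Set E} (hK : Convex ℝ K) : HomotopyDiscrete K := by
  rcases K.eq_empty_or_nonempty with rfl | hne
  · exact .of_isEmpty
  · have := hK.contractibleSpace hne
    exact .of_contractibleSpace

theorem HomotopyDiscrete.prod (hX : HomotopyDiscrete X) (hY : HomotopyDiscrete Y) :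
    HomotopyDiscrete (X × Y) := by
  obtain ⟨f, hf, hidf⟩ := hX
  obtain ⟨g, hg, hidg⟩ := hY
  exact ⟨f.prodMap g,
    (hf.comp_continuous continuous_fst).prodMk (hg.comp_continuous continuous_snd),
    hidf.prodMap hidg⟩

theorem HomotopyDiscrete.setProd {S : Set X} {T : Set Y} (hS : HomotopyDiscrete S)
    (hT : HomotopyDiscrete T) : HomotopyDiscrete (S ×ˢ T : Set (X × Y)) :=
  (hS.prod hT).of_leftInverse (Homeomorph.Set.prod S T) (Homeomorph.Set.prod S T).symm
    (Homeomorph.Set.prod S T).left_inv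

section Fibers

variable {ι : Type*}

theorem HomotopyDiscrete.of_isLocallyConstant {l : X → ι} (hl : IsLocallyConstant l)
    (h : ∀ i, HomotopyDiscrete (l ⁻¹' {i})) : HomotopyDiscrete X := by
  choose f hf H using h
  replace H i := (H i).some
  let S (i : ι) : Set (I × X) := {p | l p.2 = i}
  let φ (i : ι) : C(S i, X) := ⟨fun p ↦ H i (p.1.1, ⟨p.1.2, p.2⟩), by fun_prop⟩
  have hφ (i j : ι) (p : I × X) (hi : p ∈ S i) (hj : p ∈ S j) : φ i ⟨p, hi⟩ = φ j ⟨p, hj⟩ := by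
    obtain rfl : i = j := hi.symm.trans hj
    rfl
  have hS (p : I × X) : ∃ i, S i ∈ 𝓝 p :=
    ⟨l p.2, ((hl.isOpen_fiber _).preimage continuous_snd).mem_nhds rfl⟩
  let F := ContinuousMap.liftCover S φ hφ hS
  have hF {i : ι} (t : I) (x : X) (hx : l x = i) : F (t, x) = H i (t, ⟨x, hx⟩) :=
    ContinuousMap.liftCover_coe (⟨(t, x), hx⟩ : S i)
  refine ⟨⟨fun x ↦ F (1, x), by fun_prop⟩, ?_,
    ⟨{ toContinuousMap := F
       map_zero_left := fun x ↦ by simp [hF 0 x rfl]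
       map_one_left := fun x ↦ rfl }⟩⟩
  refine (IsLocallyConstant.iff_eventually_eq _).2 fun x ↦ ?_
  have hfx := (hf (l x)).eventually_eq ⟨x, rfl⟩
  rw [nhds_subtype, eventually_comap] at hfx
  filter_upwards [hfx, hl.eventually_eq x] with y hy hxy
  simpa [hF 1 y hxy, hF 1 x rfl] using congrArg Subtype.val (hy ⟨y, hxy⟩ rfl)

theorem HomotopyDiscrete.fiber {l : X → ι} (hl : IsLocallyConstant l) (h : HomotopyDiscrete X)
    (i : ι) : HomotopyDiscrete (l ⁻¹' {i}) := by
  obtain ⟨f, hf, ⟨H⟩⟩ := h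
  have hH (t : I) (x : l ⁻¹' {i}) : H (t, x) ∈ l ⁻¹' {i} := by
    have hconst : IsLocallyConstant fun t : I ↦ l (H (t, x)) :=
      hl.comp_continuous (f := fun t : I ↦ H (t, x)) (by fun_prop)
    exact (hconst.apply_eq_of_preconnectedSpace t 0).trans ((congrArg l (H.apply_zero x)).trans x.2)
  let F : C(I × (l ⁻¹' {i}), l ⁻¹' {i}) := ⟨fun p ↦ ⟨H (p.1, p.2), hH p.1 p.2⟩, by fun_prop⟩
  refine ⟨⟨fun x ↦ F (1, x), by fun_prop⟩, ?_,
    ⟨{ toContinuousMap := F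
       map_zero_left := fun x ↦ Subtype.ext (H.apply_zero x)
       map_one_left := fun x ↦ rfl }⟩⟩
  refine (IsLocallyConstant.iff_eventually_eq _).2 fun x ↦ ?_
  filter_upwards [(hf.comp_continuous continuous_subtype_val).eventually_eq x] with y hy
  exact Subtype.ext (by simpa [F] using hy)

variable [TopologicalSpace ι] [DiscreteTopology ι] {S : Set X} {l : X → ι}

theorem HomotopyDiscrete.of_continuousOn_discrete (hl : ContinuousOn l S)
    (h : ∀ i, HomotopyDiscrete {x ∈ S | l x = i}) : HomotopyDiscrete S :=
  of_isLocallyConstant ((IsLocallyConstant.iff_continuous _).2 hl.domRestrict) fun i ↦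
    (h i).of_leftInverse ⟨fun x ↦ ⟨x.1, x.1.2, x.2⟩, by fun_prop⟩
      ⟨fun x ↦ ⟨⟨x.1, x.2.1⟩, x.2.2⟩, by fun_prop⟩ fun _ ↦ rfl

theorem HomotopyDiscrete.sep_eq (hl : ContinuousOn l S) (h : HomotopyDiscrete S) (i : ι) :
    HomotopyDiscrete {x ∈ S | l x = i} :=
  (h.fiber ((IsLocallyConstant.iff_continuous _).2 hl.domRestrict) i).of_leftInverse
    ⟨fun x ↦ ⟨⟨x.1, x.2.1⟩, x.2.2⟩, by fun_prop⟩
    ⟨fun x ↦ ⟨x.1, x.1.2, x.2⟩, by fun_prop⟩ fun _ ↦ rfl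

end Fibers

section Real

variable {S : Set X} {a b : X → ℝ}

theorem continuousOn_sign_comp (hb : ContinuousOn b S) (hb0 : ∀ x ∈ S, b x ≠ 0) :
    ContinuousOn (fun x ↦ SignType.sign (b x)) S :=
  fun x hx ↦ (continuousAt_sign_of_ne_zero (hb0 x hx)).comp_continuousWithinAt (hb x hx)

theorem sign_eq_sign_iff_mul_pos {s t : ℝ} (ht : t ≠ 0) :
    SignType.sign s = SignType.sign t ↔ 0 < t * s := by
  rcases ht.lt_or_gt with ht | ht
  · simp [sign_neg ht, sign_eq_neg_one_iff, mul_pos_iff, ht, ht.not_gt]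
  · simp [sign_pos ht, sign_eq_one_iff, ht]

theorem HomotopyDiscrete.sep_mul_pos (hb : ContinuousOn b S) (hb0 : ∀ x ∈ S, b x ≠ 0)
    (h : HomotopyDiscrete S) {e : ℝ} (he : e ≠ 0) : HomotopyDiscrete {x ∈ S | 0 < e * b x} :=
  (h.sep_eq (continuousOn_sign_comp hb hb0) (SignType.sign e)).congr_set fun _ ↦
    and_congr_right' (sign_eq_sign_iff_mul_pos he).symm

theorem HomotopyDiscrete.sep_ne_zero (hb : ContinuousOn b S)
    (h : ∀ e ≠ 0, HomotopyDiscrete {x ∈ S | 0 < e * b x}) : HomotopyDiscrete {x ∈ S | b x ≠ 0} := by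
  refine .of_continuousOn_discrete
    (continuousOn_sign_comp (hb.mono (sep_subset _ _)) fun x hx ↦ hx.2) fun i ↦ ?_
  rcases eq_or_ne i 0 with rfl | hi
  · have : IsEmpty {x ∈ {x ∈ S | b x ≠ 0} | SignType.sign (b x) = 0} :=
      ⟨fun x ↦ x.2.1.2 (sign_eq_zero_iff.1 x.2.2)⟩
    exact .of_isEmpty
  · have he : (i : ℝ) ≠ 0 := by cases i <;> simp_all
    have hsign : SignType.sign (i : ℝ) = i := by cases i <;> simp
    have hpos (x : X) : SignType.sign (b x) = i ↔ 0 < i * b x := by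
      rw [← sign_eq_sign_iff_mul_pos he, hsign]
    refine (h i he).congr_set fun x ↦ ?_
    simp only [mem_ofPred_eq, hpos, and_assoc]
    exact and_congr_right' (and_iff_right_of_imp fun hx hb ↦ by simp [hb] at hx)

theorem sqrt_sq_add_sq_add_pos {a b : ℝ} (h : a ≠ 0 ∨ 0 < b) : 0 < √(a ^ 2 + b ^ 2) + b := by
  rcases h with ha | hb
  · have : |b| < √(a ^ 2 + b ^ 2) :=
      Real.lt_sqrt_of_sq_lt (by rw [sq_abs]; exact lt_add_of_pos_left _ (by positivity))
    linarith [neg_abs_le b]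
  · positivity

theorem add_div_sqrt_mul_self {a b : ℝ} (h : a ≠ 0 ∨ 0 < b) :
    b + a / (√(a ^ 2 + b ^ 2) + b) * a = √(a ^ 2 + b ^ 2) := by
  have hden := (sqrt_sq_add_sq_add_pos h).ne'
  have hsq : √(a ^ 2 + b ^ 2) ^ 2 = a ^ 2 + b ^ 2 := Real.sq_sqrt (by positivity)
  field_simp
  linear_combination -hsq

-- The fibres of the projection to `X` are nonempty open half-lines or lines, so any continuous
-- section, such as `t` below, is a homotopy inverse.
theorem HomotopyDiscrete.add_mul_pos (ha : ContinuousOn a S) (hb : ContinuousOn b S)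
    (h : HomotopyDiscrete {x ∈ S | a x ≠ 0 ∨ 0 < b x}) :
    HomotopyDiscrete {p : X × ℝ | p.1 ∈ S ∧ 0 < b p.1 + p.2 * a p.1} := by
  set T := {x ∈ S | a x ≠ 0 ∨ 0 < b x}
  set E := {p : X × ℝ | p.1 ∈ S ∧ 0 < b p.1 + p.2 * a p.1}
  let t (x : X) : ℝ := a x / (√(a x ^ 2 + b x ^ 2) + b x)
  have ht {x : X} (hx : x ∈ T) : 0 < b x + t x * a x := by
    rw [add_div_sqrt_mul_self hx.2]
    rcases hx.2 with hax | hbx <;> positivity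
  have htc : ContinuousOn t T := by
    have := ha.mono (sep_subset S _ : T ⊆ S)
    have := hb.mono (sep_subset S _ : T ⊆ S)
    exact .div (by fun_prop) (by fun_prop) fun x hx ↦ (sqrt_sq_add_sq_add_pos hx.2).ne'
  have hET {p : X × ℝ} (hp : p ∈ E) : p.1 ∈ T :=
    ⟨hp.1, or_iff_not_imp_left.2 fun h0 ↦ by simpa [not_not.1 h0] using hp.2⟩
  let s : C(E, T) := ⟨fun p ↦ ⟨p.1.1, hET p.2⟩, by fun_prop⟩
  let r : C(T, E) := ⟨fun x ↦ ⟨(x, t x), x.2.1, ht x.2⟩,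
    (continuous_subtype_val.prodMk htc.domRestrict).subtype_mk _⟩
  have hmem (τ : I) (p : E) : ((p.1.1, (1 - τ) * p.1.2 + τ * t p.1.1) : X × ℝ) ∈ E := by
    have hconv := convex_Ioi (0 : ℝ) p.2.2 (ht (hET p.2)) (one_minus_nonneg τ) τ.2.1 (by ring)
    simp only [smul_eq_mul, mem_Ioi] at hconv
    exact ⟨p.2.1, by linarith⟩
  have htE : Continuous fun p : E ↦ t p.1.1 := htc.domRestrict.comp s.continuous
  exact h.of_homotopic_id s r
    ⟨{ toFun := fun q ↦ ⟨_, hmem q.1 q.2⟩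
       continuous_toFun := .subtype_mk (.prodMk (by fun_prop)
        (.add (by fun_prop) (.mul (by fun_prop) (htE.comp continuous_snd)))) _
       map_zero_left := fun p ↦ by simp
       map_one_left := fun p ↦ Subtype.ext (by simp; rfl) }⟩

theorem HomotopyDiscrete.of_sep_mul_pos (hb : ContinuousOn b S) (hb0 : ∀ x ∈ S, b x ≠ 0)
    (h : ∀ e ≠ 0, HomotopyDiscrete {x ∈ S | 0 < e * b x}) : HomotopyDiscrete S :=
  (sep_ne_zero hb h).congr_set fun x ↦ (and_iff_left_of_imp (hb0 x)).symm

theorem HomotopyDiscrete.add_mul_ne_zero (ha : ContinuousOn a S) (hb : ContinuousOn b S)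
    (h : ∀ e ≠ 0, HomotopyDiscrete {x ∈ S | a x ≠ 0 ∨ 0 < e * b x}) :
    HomotopyDiscrete {p : X × ℝ | p.1 ∈ S ∧ b p.1 + p.2 * a p.1 ≠ 0} := by
  have hfst : MapsTo Prod.fst {p : X × ℝ | p.1 ∈ S} S := fun _ ↦ id
  refine sep_ne_zero (.add (hb.comp continuousOn_fst hfst)
    (continuousOn_snd.mul (ha.comp continuousOn_fst hfst))) fun e he ↦ ?_
  refine (add_mul_pos (a := fun x ↦ e * a x) (b := fun x ↦ e * b x) (continuousOn_const.mul ha)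
    (continuousOn_const.mul hb) ((h e he).congr_set fun x ↦ ?_)).congr_set fun p ↦ ?_
  · simp only [mem_ofPred_eq, mul_ne_zero_iff, ne_eq, he, not_false_eq_true, true_and]
  · simp only [mem_ofPred_eq, mul_add, mul_left_comm e]
    rfl

theorem HomotopyDiscrete.ne_zero : HomotopyDiscrete {x : ℝ | x ≠ 0} := by
  refine (sep_ne_zero (S := univ) continuousOn_id fun e _ ↦ ?_).congr_set fun x ↦ by simp
  refine .of_convex (convex_univ.inter ?_)
  exact (convex_Ioi 0).linear_preimage (LinearMap.mul ℝ ℝ e)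

theorem HomotopyDiscrete.add_mul_mul_ne_zero (hb : ContinuousOn b S) (hb0 : ∀ x ∈ S, b x ≠ 0)
    (h : HomotopyDiscrete S) :
    HomotopyDiscrete {p : (X × ℝ) × ℝ | p.1.1 ∈ S ∧ b p.1.1 + p.2 * p.1.2 ≠ 0} := by
  have hS : MapsTo Prod.fst (S ×ˢ (univ : Set ℝ)) S := fun _ hp ↦ hp.1
  have hbS : ContinuousOn (fun p : X × ℝ ↦ b p.1) (S ×ˢ univ) := hb.comp continuousOn_fst hS
  refine (add_mul_ne_zero (S := S ×ˢ univ) continuousOn_snd hbS fun e he ↦ ?_).congr_set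
    fun p ↦ by simp
  refine .of_sep_mul_pos (b := fun p : X × ℝ ↦ e * b p.1)
    (continuousOn_const.mul (hbS.mono (sep_subset _ _)))
    (fun p hp ↦ mul_ne_zero he (hb0 _ hp.1.1)) fun δ hδ ↦ ?_
  have hδS := h.sep_mul_pos hb hb0 (mul_ne_zero hδ he)
  rcases hδ.lt_or_gt with hδ | hδ
  · refine (hδS.setProd .ne_zero).congr_set fun p ↦ ?_
    have hneg : 0 < δ * e * b p.1 → ¬0 < e * b p.1 := fun hp hpos ↦ by nlinarith
    simp only [mem_ofPred_eq, mem_prod, mem_univ, ← mul_assoc]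
    tauto
  · refine (hδS.setProd (.of_convex convex_univ)).congr_set fun p ↦ ?_
    have hpos : 0 < δ * e * b p.1 ↔ 0 < e * b p.1 := by rw [mul_assoc, mul_pos_iff_of_pos_left hδ]
    simp only [mem_ofPred_eq, mem_prod, mem_univ, ← mul_assoc]
    tauto

theorem HomotopyDiscrete.add_mul_ne_zero₂ {a' b' : X → ℝ} (ha : ContinuousOn a S)
    (hb : ContinuousOn b S) (ha' : ContinuousOn a' S) (hb' : ContinuousOn b' S)
    (h : ∀ e ≠ 0, ∀ f ≠ 0,
      HomotopyDiscrete {x ∈ S | (a x ≠ 0 ∨ 0 < e * b x) ∧ (a' x ≠ 0 ∨ 0 < f * b' x)}) :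
    HomotopyDiscrete {p : (X × ℝ) × ℝ | p.1.1 ∈ S ∧ b p.1.1 + p.1.2 * a p.1.1 ≠ 0 ∧
      b' p.1.1 + p.2 * a' p.1.1 ≠ 0} := by
  have hS : MapsTo Prod.fst {p : X × ℝ | p.1 ∈ S ∧ b p.1 + p.2 * a p.1 ≠ 0} S := fun _ hp ↦ hp.1
  refine (add_mul_ne_zero (ha'.comp continuousOn_fst hS) (hb'.comp continuousOn_fst hS)
    fun f hf ↦ ?_).congr_set fun p ↦ (and_assoc (c := _ ≠ _)).symm
  have hsub := sep_subset S fun x ↦ a' x ≠ 0 ∨ 0 < f * b' x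
  refine (add_mul_ne_zero (ha.mono hsub) (hb.mono hsub) fun e he ↦
    (h e he f hf).congr_set fun x ↦ ?_).congr_set fun p ↦ ?_ <;>
  · simp only [mem_ofPred_eq, Function.comp_apply]
    tauto

end Real

end HomotopyDiscrete

section Chain

open Set Topology Complex

/-- The oriented area of the parallelogram spanned by two plane vectors. -/
def cross (z w : ℂ) : ℝ :=
  z.re * w.im - z.im * w.re

theorem cross_zero_right (z : ℂ) : cross z 0 = 0 := by simp [cross]

theorem cross_mul_mul (a z w : ℂ) : cross (a * z) (a * w) = normSq a * cross z w := by
  simp only [cross, mul_re, mul_im, normSq_apply]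
  ring

theorem cross_one_left (z : ℂ) : cross 1 z = z.im := by simp [cross]

theorem cross_I_ne_zero_iff {z : ℂ} : cross I z ≠ 0 ↔ z.re ≠ 0 := by simp [cross]

theorem cross_swap (z w : ℂ) : cross z w = -cross w z := by
  simp only [cross]
  ring

theorem cross_ne_zero_comm {z w : ℂ} : cross z w ≠ 0 ↔ cross w z ≠ 0 := by
  rw [cross_swap, neg_ne_zero]

theorem cross_neg_left (w z : ℂ) : cross (-w) z = -cross w z := by
  simp only [cross, neg_re, neg_im]
  ring

theorem cross_real_mul_right (w z : ℂ) (c : ℝ) : cross w (c * z) = c * cross w z := by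
  simp only [cross, re_ofReal_mul, im_ofReal_mul]
  ring

theorem cross_real_mul_left (w z : ℂ) (t : ℝ) : cross (t * w) z = t * cross w z := by
  rw [cross_swap, cross_real_mul_right, cross_swap z, mul_neg, neg_neg]

theorem cross_eq_normSq_mul_im_div {z : ℂ} (hz : z ≠ 0) (w : ℂ) :
    cross z w = normSq z * (w / z).im := by
  rw [← cross_one_left, ← cross_mul_mul, mul_one, mul_div_cancel₀ _ hz]

theorem cross_exp_exp (s t : ℂ) :
    cross (exp s) (exp t) = Real.exp s.re * Real.exp t.re * Real.sin (t.im - s.im) := by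
  simp only [cross, exp_re, exp_im, Real.sin_sub]
  ring

@[fun_prop]
theorem continuous_cross : Continuous fun p : ℂ × ℂ ↦ cross p.1 p.2 := by
  unfold cross
  fun_prop

/-- The chains of `n` plane vectors issuing from `a`: sequences in which consecutive vectors,
beginning with `a` and the first entry, are linearly independent. -/
def chain (a : ℂ) (n : ℕ) : Set (Fin n → ℂ) :=
  {v | ∀ i : Fin n, cross (vecCons a v i.castSucc) (v i) ≠ 0}

variable {n : ℕ} {a : ℂ} {v : Fin n → ℂ}

/-- The vectors obtained from `a` by successive multiplication with the exponentials of `l`. -/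
noncomputable def expChain (a : ℂ) (l : Fin n → ℂ) (i : Fin n) : ℂ :=
  exp (log a + Fin.partialSum l i.succ)

/-- The logarithms of the quotients of consecutive vectors of a chain: an inverse of
`expChain a`. -/
noncomputable def logChain (a : ℂ) (v : Fin n → ℂ) (i : Fin n) : ℂ :=
  log (v i / vecCons a v i.castSucc)

theorem cons_ne_zero_of_mem_chain (ha : a ≠ 0) (hv : v ∈ chain a n) (j : Fin (n + 1)) :
    vecCons a v j ≠ 0 := by
  refine Fin.cases ha (fun i hi ↦ hv i ?_) j
  rw [← cons_val_succ a v i, hi, cross_zero_right]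

theorem im_div_ne_zero_of_mem_chain (ha : a ≠ 0) (hv : v ∈ chain a n) (i : Fin n) :
    (v i / vecCons a v i.castSucc).im ≠ 0 := fun h ↦
  hv i (by rw [cross_eq_normSq_mul_im_div (cons_ne_zero_of_mem_chain ha hv _), h, mul_zero])

theorem cons_expChain (ha : a ≠ 0) (l : Fin n → ℂ) (j : Fin (n + 1)) :
    vecCons a (expChain a l) j = exp (log a + Fin.partialSum l j) := by
  refine Fin.cases ?_ (fun i ↦ rfl) j
  simp [exp_log ha]

theorem expChain_logChain (ha : a ≠ 0) (hv : v ∈ chain a n) : expChain a (logChain a v) = v := by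
  have hvert (j : Fin (n + 1)) :
      exp (log a + Fin.partialSum (logChain a v) j) = vecCons a v j := by
    induction j using Fin.induction with
    | zero => simp [exp_log ha]
    | succ i ih =>
      have hi := cons_ne_zero_of_mem_chain ha hv i.castSucc
      have hi' := cons_ne_zero_of_mem_chain ha hv i.succ
      rw [cons_val_succ] at hi' ⊢
      rw [Fin.partialSum_succ, ← add_assoc, exp_add, ih, logChain, exp_log (div_ne_zero hi' hi),
        mul_div_cancel₀ _ hi]
  exact funext fun i ↦ hvert i.succ

theorem expChain_mem_chain_iff (ha : a ≠ 0) (l : Fin n → ℂ) :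
    expChain a l ∈ chain a n ↔ ∀ i, Real.sin (l i).im ≠ 0 := by
  refine forall_congr' fun i ↦ ?_
  rw [cons_expChain ha, expChain, cross_exp_exp, Fin.partialSum_succ, ← add_assoc, add_im _ (l i),
    add_sub_cancel_left]
  simp [Real.exp_ne_zero]

theorem last_expChain (ha : a ≠ 0) (l : Fin n → ℂ) :
    vecCons a (expChain a l) (Fin.last n) = exp (log a + ∑ i, l i) := by
  rw [cons_expChain ha, Fin.partialSum, Fin.val_last, List.take_of_length_le (by simp),
    List.sum_ofFn]

theorem continuous_expChain : Continuous (expChain a : (Fin n → ℂ) → Fin n → ℂ) := by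
  have hsum (j : Fin (n + 1)) : Continuous fun l : Fin n → ℂ ↦ Fin.partialSum l j := by
    induction j using Fin.induction with
    | zero => simpa using continuous_const
    | succ i ih => simp only [Fin.partialSum_succ]; fun_prop
  exact continuous_pi fun i ↦ by
    have := hsum i.succ
    unfold expChain
    fun_prop

theorem continuousOn_logChain (ha : a ≠ 0) : ContinuousOn (logChain a) (chain a n) := by
  refine continuousOn_pi.2 fun i ↦ ContinuousOn.clog (ContinuousOn.div (by fun_prop) ?_ ?_) ?_
  · exact Continuous.continuousOn (by fun_prop)
  · exact fun v hv ↦ cons_ne_zero_of_mem_chain ha hv _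
  · exact fun v hv ↦ .inr (im_div_ne_zero_of_mem_chain ha hv i)

theorem exp_add_sum_logChain (ha : a ≠ 0) (hv : v ∈ chain a n) :
    exp (log a + ∑ i, logChain a v i) = vecCons a v (Fin.last n) := by
  rw [← last_expChain ha, expChain_logChain ha hv]

theorem sin_ne_zero_of_mem_Ioo {t : ℝ} (ht : t ∈ Ioo (-Real.pi) Real.pi) (ht0 : t ≠ 0) :
    Real.sin t ≠ 0 :=
  (Real.sin_eq_zero_iff_of_lt_of_lt ht.1 ht.2).not.2 ht0

theorem convex_sign_fiber_sep_ne_zero (e : SignType) :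
    Convex ℝ {t : ℝ | t ≠ 0 ∧ SignType.sign t = e} := by
  refine OrdConnected.convex ⟨fun x hx y hy z hz ↦ ?_⟩
  have h : SignType.sign z = e := le_antisymm
    ((SignType.sign.monotone hz.2).trans_eq hy.2) (hx.2.ge.trans (SignType.sign.monotone hz.1))
  exact ⟨sign_ne_zero.1 (h ▸ hx.2 ▸ sign_ne_zero.2 hx.1), h⟩

theorem arg_mem_Ioo_of_im_ne_zero {z : ℂ} (hz : z.im ≠ 0) : z.arg ∈ Ioo (-Real.pi) Real.pi :=
  ⟨neg_pi_lt_arg z, arg_lt_pi_iff.2 (.inr hz)⟩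

theorem arg_ne_zero_of_im_ne_zero {z : ℂ} (hz : z.im ≠ 0) : z.arg ≠ 0 :=
  fun h ↦ hz (arg_eq_zero_iff.1 h).2

theorem HomotopyDiscrete.sep_im_mem_Ioo_ne_zero {B : Type*} [TopologicalSpace B]
    {Q : Set ((Fin n → ℂ) × B)}
    (h : ∀ K : Set (Fin n → ℂ), Convex ℝ K → HomotopyDiscrete {p | p.1 ∈ K ∧ p ∈ Q}) :
    HomotopyDiscrete
      {p | (∀ i, (p.1 i).im ∈ Ioo (-Real.pi) Real.pi ∧ (p.1 i).im ≠ 0) ∧ p ∈ Q} := by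
  refine .of_continuousOn_discrete (l := fun p i ↦ SignType.sign (p.1 i).im)
    (continuousOn_pi.2 fun i ↦ continuousOn_sign_comp (by fun_prop) fun p hp ↦ (hp.1 i).2)
    fun e ↦ ?_
  have hK : Convex ℝ {l : Fin n → ℂ | ∀ i, (l i).im ∈
      Ioo (-Real.pi) Real.pi ∩ {t | t ≠ 0 ∧ SignType.sign t = e i}} := by
    rw [ofPred_forall]
    exact convex_iInter fun i ↦ ((convex_Ioo _ _).inter
      (convex_sign_fiber_sep_ne_zero (e i))).linear_preimage
        (imLm ∘ₗ (LinearMap.proj i : (Fin n → ℂ) →ₗ[ℝ] ℂ))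
  refine (h _ hK).congr_set fun p ↦ ?_
  simp only [mem_ofPred_eq, funext_iff, mem_inter_iff, forall_and]
  tauto

theorem HomotopyDiscrete.of_chain {B : Type*} [TopologicalSpace B] (ha : a ≠ 0) {R : Set (ℂ × B)}
    (h : ∀ K : Set (Fin n → ℂ), Convex ℝ K →
      HomotopyDiscrete {p : (Fin n → ℂ) × B | p.1 ∈ K ∧ (exp (log a + ∑ i, p.1 i), p.2) ∈ R}) :
    HomotopyDiscrete {p : (Fin n → ℂ) × B |
      p.1 ∈ chain a n ∧ (vecCons a p.1 (Fin.last n), p.2) ∈ R} := by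
  have hlog := sep_im_mem_Ioo_ne_zero
    (Q := {p : (Fin n → ℂ) × B | (exp (log a + ∑ i, p.1 i), p.2) ∈ R}) h
  refine hlog.of_retract (fun p ↦ (logChain a p.1, p.2)) (fun p ↦ (expChain a p.1, p.2))
    ?_ ?_ ?_ ?_ ?_
  · exact ((continuousOn_logChain ha).comp continuousOn_fst fun p hp ↦ hp.1).prodMk continuousOn_snd
  · exact ((continuous_expChain.comp continuous_fst).prodMk continuous_snd).continuousOn
  · rintro p ⟨hp, hR⟩
    refine ⟨fun i ↦ ?_, by rwa [mem_ofPred_eq, exp_add_sum_logChain ha hp]⟩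
    have him := im_div_ne_zero_of_mem_chain ha hp i
    simp only [logChain, log_im]
    exact ⟨arg_mem_Ioo_of_im_ne_zero him, arg_ne_zero_of_im_ne_zero him⟩
  · rintro p ⟨hp, hR⟩
    refine ⟨(expChain_mem_chain_iff ha _).2 fun i ↦ sin_ne_zero_of_mem_Ioo (hp i).1 (hp i).2, ?_⟩
    rwa [last_expChain ha]
  · rintro p ⟨hp, -⟩
    exact Prod.ext (expChain_logChain ha hp) rfl

end Chain

section Angle

open Set Topology

theorem continuousOn_floor_comp {X : Type*} [TopologicalSpace X] {S : Set X} {g : X → ℝ}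
    (hg : ContinuousOn g S) (hg' : ∀ x ∈ S, ∀ n : ℤ, g x ≠ n) :
    ContinuousOn (fun x ↦ ⌊g x⌋) S := fun x hx ↦ by
  have hlt : (⌊g x⌋ : ℝ) < g x := (Int.floor_le _).lt_of_ne' (hg' x hx _)
  refine (continuousWithinAt_const (b := ⌊g x⌋)).congr_of_eventuallyEq ?_ rfl
  filter_upwards [(hg x hx).eventually (Ioo_mem_nhds hlt (Int.lt_floor_add_one _))] with y hy
  exact Int.floor_eq_iff.2 ⟨hy.1.le, hy.2⟩

theorem sin_ne_zero_and_floor_eq_iff {t : ℝ} {j : ℤ} :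
    Real.sin t ≠ 0 ∧ ⌊t / Real.pi⌋ = j ↔ t ∈ Ioo (j * Real.pi) ((j + 1) * Real.pi) := by
  rw [Int.floor_eq_iff, le_div_iff₀ Real.pi_pos, div_lt_iff₀ Real.pi_pos]
  refine ⟨fun ⟨hsin, hle, hlt⟩ ↦ ⟨hle.lt_of_ne ?_, hlt⟩, fun ⟨hgt, hlt⟩ ↦ ⟨?_, hgt.le, hlt⟩⟩
  · rintro rfl
    exact hsin (Real.sin_int_mul_pi j)
  · have hpos : 0 < Real.sin (t - j * Real.pi) :=
      Real.sin_pos_of_pos_of_lt_pi (by linarith) (by linarith)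
    rw [Real.sin_sub_int_mul_pi] at hpos
    exact right_ne_zero_of_mul hpos.ne'

variable {E : Type*} [AddCommGroup E] [Module ℝ E] [TopologicalSpace E] [ContinuousAdd E]
  [ContinuousSMul ℝ E] {K : Set E} {d : E →ᴬ[ℝ] ℝ}

theorem HomotopyDiscrete.sep_sin_ne_zero (hK : Convex ℝ K) :
    HomotopyDiscrete {k ∈ K | Real.sin (d k) ≠ 0} := by
  refine .of_continuousOn_discrete (l := fun k ↦ ⌊d k / Real.pi⌋)
    (continuousOn_floor_comp (d.continuous.div_const _).continuousOn fun k hk n hn ↦ ?_) fun j ↦ ?_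
  · rw [div_eq_iff Real.pi_ne_zero] at hn
    exact hk.2 (hn ▸ Real.sin_int_mul_pi n)
  · exact (of_convex (hK.inter ((convex_Ioo (j * Real.pi) ((j + 1) * Real.pi)).affine_preimage
      d.toAffineMap))).congr_set fun k ↦
        and_assoc.trans (and_congr_right' sin_ne_zero_and_floor_eq_iff)

end Angle

section Lines

open Set Topology Complex

/-- The angle in `(-π, 0]` of the real line spanned by `z`, with value `0` on the real line. -/
noncomputable def lineArg (z : ℂ) : ℝ :=
  arg (-(z.im * z))

theorem im_neg_im_mul_self_neg {z : ℂ} (hz : z.im ≠ 0) : (-(z.im * z)).im < 0 := by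
  simpa using hz

theorem lineArg_mem_Ioc (z : ℂ) : lineArg z ∈ Ioc (-Real.pi) 0 := by
  refine ⟨neg_pi_lt_arg _, ?_⟩
  by_cases hz : z.im = 0
  · simp [lineArg, hz]
  · exact (arg_neg_iff.2 (im_neg_im_mul_self_neg hz)).le

theorem lineArg_neg {z : ℂ} (hz : z.im ≠ 0) : lineArg z < 0 :=
  arg_neg_iff.2 (im_neg_im_mul_self_neg hz)

theorem lineArg_real_mul {c : ℝ} (hc : c ≠ 0) (z : ℂ) : lineArg (c * z) = lineArg z := by
  rw [lineArg, lineArg, ← arg_real_mul (-(z.im * z)) (sq_pos_of_ne_zero hc), im_ofReal_mul]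
  push_cast
  ring_nf

theorem lineArg_exp {ζ : ℂ} (hζ : ζ.im ∈ Ioo (-Real.pi) 0) : lineArg (exp ζ) = ζ.im := by
  have hsin : 0 < -(exp ζ).im := by
    rw [exp_im, neg_mul_eq_mul_neg]
    exact mul_pos (Real.exp_pos _) (neg_pos.2 (Real.sin_neg_of_neg_of_neg_pi_lt hζ.2 hζ.1))
  rw [lineArg, ← neg_mul, ← ofReal_neg, arg_real_mul _ hsin, ← log_im,
    log_exp hζ.1 (hζ.2.le.trans Real.pi_pos.le)]

theorem continuousOn_lineArg : ContinuousOn lineArg {z | z.im ≠ 0} := fun z hz ↦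
  ((continuousAt_arg (.inr (im_neg_im_mul_self_neg hz).ne)).comp (f := fun z : ℂ ↦ -(z.im * z))
    (by fun_prop)).continuousWithinAt

theorem cross_exp_mul_I_exp (t : ℝ) (ζ : ℂ) :
    cross (exp (t * I)) (exp ζ) = Real.exp ζ.re * Real.sin (ζ.im - t) := by
  simp [cross_exp_exp]

theorem cross_exp_mul_I_eq_zero_iff {z : ℂ} (hz : z.im ≠ 0) (t : ℝ) :
    cross (exp (t * I)) z = 0 ↔ Real.sin (t - lineArg z) = 0 := by
  have hw : -(z.im * z) ≠ 0 := by simpa [hz] using ne_of_apply_ne im hz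
  have h : cross (exp (t * I)) (-(z.im * z)) =
      Real.exp (log (-(z.im * z))).re * Real.sin (lineArg z - t) := by
    rw [lineArg, ← log_im, ← cross_exp_mul_I_exp, exp_log hw]
  rw [← neg_mul, ← ofReal_neg, cross_real_mul_right] at h
  rw [← neg_sub, Real.sin_neg, neg_eq_zero, ← mul_eq_zero_iff_left (neg_ne_zero.2 hz), h,
    mul_eq_zero_iff_left (Real.exp_ne_zero _)]

/-- The condition on the angle `u` of a moving line, relative to a sheet of the covering
`ℝ → ℝ / 2π`, and on a vector `z` which describes one sheet of the configurations where `sin u` is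
positive or `z` lies neither on the real line nor on the moving line. -/
def sheet (u : ℝ) : Set ℂ :=
  {z | z.im ≠ 0 ∧ u ∈ Ioo (lineArg z) (lineArg z + 2 * Real.pi) ∨ u ∈ Ioo 0 Real.pi}

theorem mem_Ioo_of_sin_pos {u : ℝ} (hu : u ∈ Ioo (-Real.pi) (2 * Real.pi)) (h : 0 < Real.sin u) :
    u ∈ Ioo 0 Real.pi := by
  constructor <;> by_contra! hle
  · exact h.not_ge (Real.sin_nonpos_of_nonpos_of_neg_pi_le hle hu.1.le)
  · have := Real.sin_nonneg_of_nonneg_of_le_pi (sub_nonneg.2 hle) (by linarith [hu.2])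
    rw [Real.sin_sub_pi] at this
    linarith

theorem sub_lineArg_ne_int_mul {u : ℝ} {z : ℂ} (hz : z.im ≠ 0)
    (h : 0 < Real.sin u ∨ cross (exp (u * I)) z ≠ 0) (n : ℤ) :
    u - lineArg z ≠ n * (2 * Real.pi) := by
  intro hu
  refine h.elim (fun h ↦ ?_) fun h ↦ h ?_
  · rw [sub_eq_iff_eq_add'.1 hu, Real.sin_add_int_mul_two_pi] at h
    exact h.not_gt (Real.sin_neg_of_neg_of_neg_pi_lt (lineArg_neg hz) (lineArg_mem_Ioc z).1)
  · rw [cross_exp_mul_I_eq_zero_iff hz, hu, ← zero_add (_ * _), Real.sin_add_int_mul_two_pi,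
      Real.sin_zero]

theorem mem_sheet_iff {u : ℝ} {z : ℂ} :
    z ∈ sheet u ↔ (0 < Real.sin u ∨ z.im ≠ 0 ∧ cross (exp (u * I)) z ≠ 0) ∧
      u ∈ Ico (lineArg z) (lineArg z + 2 * Real.pi) := by
  obtain ⟨hl, hu⟩ := lineArg_mem_Ioc z
  have hpos (h : u ∈ Ioo 0 Real.pi) : 0 < Real.sin u := Real.sin_pos_of_pos_of_lt_pi h.1 h.2
  constructor
  · rintro (⟨hz, h⟩ | h)
    · refine ⟨or_iff_not_imp_left.2 fun hsin ↦ ⟨hz, ?_⟩, h.1.le, h.2⟩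
      rw [Ne, cross_exp_mul_I_eq_zero_iff hz]
      intro h0
      have hu' : u - lineArg z - Real.pi = 0 :=
        (Real.sin_eq_zero_iff_of_lt_of_lt (by linarith [h.1]) (by linarith [h.2])).1
          (by rw [Real.sin_sub_pi, h0, neg_zero])
      exact hsin (hpos ⟨by linarith, by linarith [lineArg_neg hz]⟩)
    · exact ⟨.inl (hpos h), by linarith [h.1], by linarith [h.2]⟩
  · rintro ⟨h, hle, hlt⟩
    by_cases hz : z.im = 0
    · exact .inr (mem_Ioo_of_sin_pos ⟨by linarith, by linarith⟩ (h.resolve_right fun h ↦ h.1 hz))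
    · have hne := sub_lineArg_ne_int_mul hz (h.imp_right And.right) 0
      rw [Int.cast_zero, zero_mul, sub_ne_zero] at hne
      exact .inl ⟨hz, hle.lt_of_ne' hne, hlt⟩

theorem floor_sub_lineArg {u : ℝ} (hu : 0 < Real.sin u) (z : ℂ) :
    ⌊(u - lineArg z) / (2 * Real.pi)⌋ = ⌊u / (2 * Real.pi)⌋ := by
  have hπ := Real.two_pi_pos
  obtain ⟨hl, hr⟩ := lineArg_mem_Ioc z
  have hle := (le_div_iff₀ hπ).1 (Int.floor_le (u / (2 * Real.pi)))
  have hlt := (div_lt_iff₀ hπ).1 (Int.lt_floor_add_one (u / (2 * Real.pi)))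
  rw [← Real.sin_sub_int_mul_two_pi u ⌊u / (2 * Real.pi)⌋] at hu
  have h := (mem_Ioo_of_sin_pos ⟨by linarith, by linarith⟩ hu).2
  rw [Int.floor_eq_iff, le_div_iff₀ hπ, div_lt_iff₀ hπ]
  exact ⟨by linarith, by linarith⟩

theorem continuousOn_floor_sub_lineArg :
    ContinuousOn (fun p : ℝ × ℂ ↦ ⌊(p.1 - lineArg p.2) / (2 * Real.pi)⌋)
      {p | 0 < Real.sin p.1 ∨ p.2.im ≠ 0 ∧ cross (exp (p.1 * I)) p.2 ≠ 0} := by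
  have hsin : IsOpen {p : ℝ × ℂ | 0 < Real.sin p.1} := isOpen_lt (by fun_prop) (by fun_prop)
  have him : IsOpen {p : ℝ × ℂ | p.2.im ≠ 0} := isOpen_ne_fun (by fun_prop) (by fun_prop)
  have hfloor_sin : ContinuousOn (fun p : ℝ × ℂ ↦ ⌊(p.1 - lineArg p.2) / (2 * Real.pi)⌋)
      {p | 0 < Real.sin p.1} := by
    refine ContinuousOn.congr (f := fun p : ℝ × ℂ ↦ ⌊p.1 / (2 * Real.pi)⌋)
      (continuousOn_floor_comp (by fun_prop) fun p hp n hn ↦ ?_) fun p hp ↦ floor_sub_lineArg hp _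
    rw [div_eq_iff Real.two_pi_pos.ne'] at hn
    have h0 := Real.sin_add_int_mul_two_pi 0 n
    rw [zero_add, Real.sin_zero, ← hn] at h0
    exact hp.ne' h0
  have hfloor_im : ContinuousOn (fun p : ℝ × ℂ ↦ ⌊(p.1 - lineArg p.2) / (2 * Real.pi)⌋)
      ({p | 0 < Real.sin p.1 ∨ p.2.im ≠ 0 ∧ cross (exp (p.1 * I)) p.2 ≠ 0} ∩ {p | p.2.im ≠ 0}) := by
    refine continuousOn_floor_comp (.div_const (continuousOn_fst.sub
      (continuousOn_lineArg.comp continuousOn_snd fun p hp ↦ hp.2)) _) fun p hp n hn ↦ ?_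
    rw [div_eq_iff Real.two_pi_pos.ne'] at hn
    exact sub_lineArg_ne_int_mul hp.2 (hp.1.imp_right And.right) n hn
  intro p hp
  rcases hp with h | h
  · exact (hfloor_sin.continuousAt (hsin.mem_nhds h)).continuousWithinAt
  · exact (continuousWithinAt_inter (him.mem_nhds h.1)).1 (hfloor_im p ⟨.inr h, h.1⟩)

theorem real_mul_mem_sheet {u : ℝ} {z : ℂ} {c : ℝ} (hc : c ≠ 0) :
    (c * z : ℂ) ∈ sheet u ↔ z ∈ sheet u := by
  simp [sheet, lineArg_real_mul hc, hc]

end Lines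

section Configurations

open Set Topology Complex

variable {E : Type*} [AddCommGroup E] [Module ℝ E] [TopologicalSpace E] {K : Set E}
  {u : E →ᴬ[ℝ] ℝ}

theorem starConvex_sheet (hK : Convex ℝ K) {k₀ : E} (hk₀ : k₀ ∈ K) (hu : u k₀ ∈ Ioo 0 Real.pi) :
    StarConvex ℝ (k₀, (0 : ℂ)) {p : E × ℂ | p.1 ∈ K ∧ p.2 ∈ sheet (u p.1)} := by
  rintro ⟨k, z⟩ ⟨hk, hz⟩ a b ha hb hab
  refine ⟨hK hk₀ hk ha hb hab, ?_⟩
  have hcomb : u (a • k₀ + b • k) = a • u k₀ + b • u k :=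
    Convex.combo_affine_apply (f := u.toAffineMap) hab
  obtain ⟨hl, hr⟩ := lineArg_mem_Ioc z
  simp only [Prod.smul_mk, Prod.mk_add_mk, smul_zero, zero_add, hcomb]
  rcases hb.eq_or_lt with rfl | hb
  · simpa [sheet, show a = 1 by linarith] using hu
  rw [real_smul, real_mul_mem_sheet hb.ne']
  rcases hz with ⟨hz, h⟩ | h
  · have hu' : u k₀ ∈ Ioo (lineArg z) (lineArg z + 2 * Real.pi) :=
      ⟨by linarith [hu.1], by linarith [hu.2]⟩
    exact .inl ⟨hz, convex_Ioo _ _ hu' h ha hb.le hab⟩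
  · exact .inr (convex_Ioo _ _ hu h ha hb.le hab)

theorem convex_log_sheet (hK : Convex ℝ K) :
    Convex ℝ {p : E × ℂ | p.1 ∈ K ∧ p.2.im ∈ Ioo (-Real.pi) 0 ∧
      u p.1 - p.2.im ∈ Ioo 0 (2 * Real.pi)} := by
  rintro ⟨k, ζ⟩ ⟨hk, hζ, hd⟩ ⟨k', ζ'⟩ ⟨hk', hζ', hd'⟩ a b ha hb hab
  have hcomb : u (a • k + b • k') = a • u k + b • u k' :=
    Convex.combo_affine_apply (f := u.toAffineMap) hab
  refine ⟨hK hk hk' ha hb hab, ?_, ?_⟩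
  · simpa using convex_Ioo _ _ hζ hζ' ha hb hab
  · convert convex_Ioo _ _ hd hd' ha hb hab using 1
    simp [hcomb]
    ring

variable [ContinuousAdd E] [ContinuousSMul ℝ E]

theorem HomotopyDiscrete.sheet_of_forall_notMem (hK : Convex ℝ K)
    (hu : ∀ k ∈ K, u k ∉ Ioo 0 Real.pi) :
    HomotopyDiscrete {p : E × ℂ | p.1 ∈ K ∧ p.2 ∈ sheet (u p.1)} := by
  have him {p : E × ℂ} (hp : p.1 ∈ K ∧ p.2 ∈ sheet (u p.1)) := hp.2.resolve_right (hu _ hp.1)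
  refine .of_sep_mul_pos (b := fun p ↦ p.2.im) (by fun_prop) (fun p hp ↦ (him hp).1) fun e he ↦ ?_
  have hcancel (w : ℂ) : ((-e)⁻¹ : ℝ) * (((-e : ℝ) : ℂ) * w) = w := by
    rw [← mul_assoc, ← ofReal_mul, inv_mul_cancel₀ (neg_ne_zero.2 he), ofReal_one, one_mul]
  have hne : -e ≠ 0 := neg_ne_zero.2 he
  refine (of_convex (convex_log_sheet (u := u) hK)).of_retract
    (fun p ↦ (p.1, log ((-e : ℝ) * p.2))) (fun p ↦ (p.1, ((-e)⁻¹ : ℝ) * exp p.2))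
    ?_ (by fun_prop) ?_ ?_ ?_
  · refine continuousOn_fst.prodMk (.clog (by fun_prop) fun p hp ↦ .inr ?_)
    rw [im_ofReal_mul]
    exact mul_ne_zero hne (him hp.1).1
  · rintro p ⟨hp, hpos⟩
    have hw : ((-e : ℝ) * p.2).im < 0 := by rw [im_ofReal_mul]; linarith
    have hlog : (log ((-e : ℝ) * p.2)).im ∈ Ioo (-Real.pi) 0 := by
      rw [log_im]
      exact ⟨neg_pi_lt_arg _, arg_neg_iff.2 hw⟩
    have hline := lineArg_exp hlog
    rw [exp_log (ne_of_apply_ne im hw.ne), lineArg_real_mul hne] at hline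
    obtain ⟨hl, hr⟩ := (him hp).2
    exact ⟨hp.1, hlog, by linarith, by linarith⟩
  · rintro ⟨k, ζ⟩ ⟨hk, hζ, hl, hr⟩
    have him : 0 < e * (((-e)⁻¹ : ℝ) * exp ζ).im := by
      rw [im_ofReal_mul, exp_im, ← mul_assoc, inv_neg, mul_neg, mul_inv_cancel₀ he, neg_one_mul]
      exact neg_pos.2 (mul_neg_of_pos_of_neg (Real.exp_pos _)
        (Real.sin_neg_of_neg_of_neg_pi_lt hζ.2 hζ.1))
    refine ⟨⟨hk, .inl ⟨right_ne_zero_of_mul him.ne', ?_⟩⟩, him⟩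
    rw [lineArg_real_mul (inv_ne_zero hne), lineArg_exp hζ]
    exact ⟨by linarith, by linarith⟩
  · rintro p ⟨hp, -⟩
    have hp0 : p.2 ≠ 0 := ne_of_apply_ne im (him hp).1
    exact Prod.ext rfl (by
      simp only [exp_log (mul_ne_zero (ofReal_ne_zero.2 hne) hp0), hcancel])

theorem HomotopyDiscrete.sheet (hK : Convex ℝ K) :
    HomotopyDiscrete {p : E × ℂ | p.1 ∈ K ∧ p.2 ∈ sheet (u p.1)} := by
  by_cases hu : ∃ k ∈ K, u k ∈ Ioo 0 Real.pi
  · obtain ⟨k, hk, huk⟩ := hu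
    have := (starConvex_sheet hK hk huk).contractibleSpace ⟨(k, 0), hk, .inr huk⟩
    exact .of_contractibleSpace
  · push Not at hu
    exact .sheet_of_forall_notMem hK hu

theorem HomotopyDiscrete.sep_sin_pos_or (hK : Convex ℝ K) (d : E →ᴬ[ℝ] ℝ) :
    HomotopyDiscrete {p : E × ℂ | p.1 ∈ K ∧
      (0 < Real.sin (d p.1) ∨ p.2.im ≠ 0 ∧ cross (exp (d p.1 * I)) p.2 ≠ 0)} := by
  refine .of_continuousOn_discrete (continuousOn_floor_sub_lineArg.comp
    (f := fun p : E × ℂ ↦ (d p.1, p.2)) ?_ fun p hp ↦ hp.2) fun j ↦ ?_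
  · exact ((d.continuous.comp continuous_fst).prodMk continuous_snd).continuousOn
  · refine (HomotopyDiscrete.sheet (u := d - .const ℝ E (j * (2 * Real.pi))) hK).congr_set
      fun p ↦ ?_
    have hu : (d - .const ℝ E (j * (2 * Real.pi))) p.1 = d p.1 - j * (2 * Real.pi) := rfl
    have hexp : exp ((d p.1 - j * (2 * Real.pi) : ℝ) * I) = exp (d p.1 * I) :=
      (congrArg exp (by push_cast; ring)).trans (exp_periodic.sub_int_mul_eq j)
    simp only [mem_ofPred_eq, and_assoc, mem_sheet_iff, hu, hexp, Real.sin_sub_int_mul_two_pi]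
    refine and_congr_right' (and_congr_right' ?_)
    rw [Function.comp_apply, Int.floor_eq_iff, le_div_iff₀ Real.two_pi_pos,
      div_lt_iff₀ Real.two_pi_pos, mem_Ico]
    constructor <;> rintro ⟨h₁, h₂⟩ <;> constructor <;> linarith

theorem cross_ne_zero_iff_of_sq_eq {w w' : ℂ} (h : w ^ 2 = w' ^ 2) (z : ℂ) :
    cross w z ≠ 0 ↔ cross w' z ≠ 0 := by
  rcases sq_eq_sq_iff_eq_or_eq_neg.1 h with rfl | rfl
  · rfl
  · rw [cross_neg_left, neg_ne_zero]

theorem HomotopyDiscrete.im_ne_zero : HomotopyDiscrete {z : ℂ | z.im ≠ 0} := by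
  refine (sep_ne_zero (S := univ) continuous_im.continuousOn fun e _ ↦ ?_).congr_set
    fun z ↦ by simp
  exact .of_convex (convex_univ.inter ((convex_Ioi 0).linear_preimage (e • imLm)))

/-- The mean of `t` and its representative in `[0, π]` modulo the symmetries of the cosine: a
continuous angle equal to `t` modulo `π` where `sin t ≥ 0` and to `0` modulo `π` where
`sin t ≤ 0`. -/
noncomputable def foldedAngle (t : ℝ) : ℝ :=
  (t + Real.arccos (Real.cos t)) / 2

theorem exp_foldedAngle_sq (t : ℝ) :
    exp (foldedAngle t * I) ^ 2 = exp (t * I) * (Real.cos t + |Real.sin t| * I) := by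
  have harccos : exp (Real.arccos (Real.cos t) * I) = Real.cos t + |Real.sin t| * I := by
    rw [exp_mul_I, ← ofReal_cos, ← ofReal_sin, Real.sin_arccos,
      Real.cos_arccos (Real.neg_one_le_cos t) (Real.cos_le_one t),
      ← Real.abs_sin_eq_sqrt_one_sub_cos_sq]
  rw [← harccos, ← exp_add, ← exp_nat_mul, foldedAngle]
  congr 1
  push_cast
  ring

theorem exp_foldedAngle_sq_of_nonneg {t : ℝ} (ht : 0 ≤ Real.sin t) :
    exp (foldedAngle t * I) ^ 2 = exp (t * I) ^ 2 := by
  rw [exp_foldedAngle_sq, abs_of_nonneg ht, ofReal_cos, ofReal_sin, ← exp_mul_I, sq]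

theorem exp_foldedAngle_sq_of_nonpos {t : ℝ} (ht : Real.sin t ≤ 0) :
    exp (foldedAngle t * I) ^ 2 = 1 ^ 2 := by
  rw [exp_foldedAngle_sq, abs_of_nonpos ht, ← Real.cos_neg, ← Real.sin_neg, ofReal_cos, ofReal_sin,
    ← exp_mul_I, ← exp_add]
  simp

theorem cross_exp_foldedAngle_ne_zero_iff (t : ℝ) (z : ℂ) :
    cross (exp (foldedAngle t * I)) z ≠ 0 ↔
      (z.im ≠ 0 ∨ 0 < Real.sin t) ∧ (cross (exp (t * I)) z ≠ 0 ∨ Real.sin t < 0) := by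
  have hnonneg (ht : 0 ≤ Real.sin t) :=
    cross_ne_zero_iff_of_sq_eq (exp_foldedAngle_sq_of_nonneg ht) z
  have hnonpos (ht : Real.sin t ≤ 0) :=
    cross_one_left z ▸ cross_ne_zero_iff_of_sq_eq (exp_foldedAngle_sq_of_nonpos ht) z
  rcases lt_trichotomy (Real.sin t) 0 with ht | ht | ht
  · simp [hnonpos ht.le, ht, ht.not_gt]
  · simp only [ht, lt_irrefl, or_false]
    exact ⟨fun h ↦ ⟨(hnonpos ht.le).1 h, (hnonneg ht.ge).1 h⟩, fun h ↦ (hnonpos ht.le).2 h.1⟩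
  · simp [hnonneg ht.le, ht, ht.not_gt]

theorem cross_exp_mul_I_exp_mul_I_mul (t : ℝ) (z : ℂ) :
    cross (exp (t * I)) (exp (t * I) * z) = z.im := by
  rw [← cross_one_left, ← mul_one (exp (t * I)), mul_assoc, cross_mul_mul, one_mul,
    normSq_eq_norm_sq, norm_exp_ofReal_mul_I, one_pow, one_mul]

theorem HomotopyDiscrete.sep_im_ne_zero_or (hK : Convex ℝ K) (d : E →ᴬ[ℝ] ℝ) :
    HomotopyDiscrete {p : E × ℂ | p.1 ∈ K ∧ (p.2.im ≠ 0 ∨ 0 < Real.sin (d p.1)) ∧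
      (cross (exp (d p.1 * I)) p.2 ≠ 0 ∨ Real.sin (d p.1) < 0)} := by
  have hrot (t : ℝ) (z : ℂ) : exp (t * I) * (exp (-(t * I)) * z) = z := by
    rw [← mul_assoc, ← exp_add, add_neg_cancel, exp_zero, one_mul]
  have hφ : Continuous fun p : E × ℂ ↦ exp (foldedAngle (d p.1) * I) := by
    have := d.continuous
    unfold foldedAngle
    fun_prop
  suffices HomotopyDiscrete
      {p : E × ℂ | p.1 ∈ K ∧ cross (exp (foldedAngle (d p.1) * I)) p.2 ≠ 0} from
    this.congr_set fun p ↦ and_congr_right' (cross_exp_foldedAngle_ne_zero_iff _ _).symm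
  refine ((of_convex hK).setProd .im_ne_zero).of_retract
    (fun p ↦ (p.1, exp (-(foldedAngle (d p.1) * I)) * p.2))
    (fun p ↦ (p.1, exp (foldedAngle (d p.1) * I) * p.2)) ?_ ?_ ?_ ?_ ?_
  · simp only [Complex.exp_neg]
    exact (continuous_fst.prodMk ((hφ.inv₀ fun p ↦ exp_ne_zero _).mul continuous_snd)).continuousOn
  · exact (continuous_fst.prodMk (hφ.mul continuous_snd)).continuousOn
  · rintro p ⟨hp, h⟩
    exact ⟨hp, by rwa [← hrot (foldedAngle (d p.1)) p.2, cross_exp_mul_I_exp_mul_I_mul] at h⟩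
  · rintro p ⟨hp, h⟩
    exact ⟨hp, by rwa [cross_exp_mul_I_exp_mul_I_mul]⟩
  · exact fun p _ ↦ Prod.ext rfl (hrot _ _)

theorem HomotopyDiscrete.sep_or_and_or (hK : Convex ℝ K) (d : E →ᴬ[ℝ] ℝ) {e f : ℝ} (he : e ≠ 0)
    (hf : f ≠ 0) :
    HomotopyDiscrete {p : E × ℂ | p.1 ∈ K ∧ (p.2.im ≠ 0 ∨ 0 < e * Real.sin (d p.1)) ∧
      (cross (exp (d p.1 * I)) p.2 ≠ 0 ∨ 0 < f * Real.sin (d p.1))} := by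
  wlog hpos : 0 < e generalizing d e f
  · have hneg := this (d + .const ℝ E Real.pi) (neg_ne_zero.2 he) (neg_ne_zero.2 hf)
      (neg_pos.2 ((not_lt.1 hpos).lt_of_ne he))
    have hd (k : E) : (d + .const ℝ E Real.pi) k = d k + Real.pi := rfl
    refine hneg.congr_set fun p ↦ ?_
    simp [hd, add_mul, exp_add, Real.sin_add_pi, cross_neg_left, exp_pi_mul_I]
  rcases hf.lt_or_gt with hf | hf
  · have hneg (t : ℝ) : 0 < f * t ↔ t < 0 := by
      rw [← neg_mul_neg, mul_pos_iff_of_pos_left (neg_pos.2 hf), neg_pos]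
    exact (sep_im_ne_zero_or hK d).congr_set fun p ↦ by
      simp only [mem_ofPred_eq, mul_pos_iff_of_pos_left hpos, hneg]
  · refine (sep_sin_pos_or hK d).congr_set fun p ↦ ?_
    simp only [mem_ofPred_eq, mul_pos_iff_of_pos_left hpos, mul_pos_iff_of_pos_left hf]
    exact and_congr_right' (and_or_right.symm.trans or_comm)

end Configurations

section Polygons

open Set Topology Complex

variable {a b : ℂ} {m n : ℕ}

theorem HomotopyDiscrete.sep_chain_im_last_ne_zero (ha : a ≠ 0) :
    HomotopyDiscrete {v ∈ chain a n | (vecCons a v (Fin.last n)).im ≠ 0} := by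
  refine (of_chain (B := Unit) (R := {p | p.1.im ≠ 0}) ha fun K hK ↦ ?_).of_retract
    (fun v ↦ (v, ())) Prod.fst (by fun_prop) (by fun_prop) (fun v ↦ id) (fun p ↦ id) fun v _ ↦ rfl
  let d : (Fin n → ℂ) →ᴬ[ℝ] ℝ :=
    (imCLM ∘L ∑ i, .proj i).toContinuousAffineMap + .const ℝ (Fin n → ℂ) (log a).im
  have hd (k : Fin n → ℂ) : d k = (log a + ∑ i, k i).im := by
    simp [d, add_comm]
  refine (sep_sin_ne_zero (d := d) hK).of_retract Prod.fst (fun k ↦ (k, ()))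
    (by fun_prop) (by fun_prop) ?_ ?_ (fun p _ ↦ rfl)
  · rintro p ⟨hp, h⟩
    rw [mem_ofPred_eq, exp_im] at h
    exact ⟨hp, hd p.1 ▸ right_ne_zero_of_mul h⟩
  · rintro k ⟨hk, h⟩
    exact ⟨hk, by
      rw [mem_ofPred_eq, exp_im]
      exact mul_ne_zero (Real.exp_ne_zero _) (hd k ▸ h)⟩

theorem cross_exp_exp_eq_normSq_mul (s t : ℂ) :
    cross (exp s) (exp t) = normSq (exp s) * Real.exp (t - s).re * Real.sin (t - s).im := by
  rw [cross_exp_exp, normSq_eq_norm_sq, norm_exp, sub_re, Real.exp_sub, sub_im]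
  field_simp

theorem cross_exp_mul_exp (s t z : ℂ) :
    cross (exp s * z) (exp t) =
      -(normSq (exp s) * Real.exp (t - s).re * cross (exp ((t - s).im * I)) z) := by
  have hexp : exp t = exp s * (Real.exp (t - s).re * exp ((t - s).im * I)) := by
    rw [ofReal_exp, ← exp_add, re_add_im, ← exp_add, add_sub_cancel]
  rw [hexp, cross_mul_mul, cross_real_mul_right]
  simp only [cross]
  ring

theorem HomotopyDiscrete.sep_cross_ne_zero_or {E : Type*} [AddCommGroup E] [Module ℝ E]
    [TopologicalSpace E] [ContinuousAdd E] [ContinuousSMul ℝ E] {K : Set E} (hK : Convex ℝ K)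
    (s t : E →ᴬ[ℝ] ℂ) {e f : ℝ} (he : e ≠ 0) (hf : f ≠ 0) :
    HomotopyDiscrete {p : E × ℂ | p.1 ∈ K ∧
      (cross (exp (s p.1)) p.2 ≠ 0 ∨ 0 < e * cross (exp (s p.1)) (exp (t p.1))) ∧
      (cross p.2 (exp (t p.1)) ≠ 0 ∨ 0 < f * cross (exp (s p.1)) (exp (t p.1)))} := by
  let d : E →ᴬ[ℝ] ℝ := imCLM.toContinuousAffineMap.comp (t - s)
  have hd (k : E) : d k = (t k - s k).im := rfl
  have hiff (p : E × ℂ) :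
      (cross (exp (s p.1)) (exp (s p.1) * p.2) ≠ 0 ∨
          0 < e * cross (exp (s p.1)) (exp (t p.1))) ∧
        (cross (exp (s p.1) * p.2) (exp (t p.1)) ≠ 0 ∨
          0 < f * cross (exp (s p.1)) (exp (t p.1))) ↔
      (p.2.im ≠ 0 ∨ 0 < e * Real.sin (d p.1)) ∧
        (cross (exp (d p.1 * I)) p.2 ≠ 0 ∨ 0 < f * Real.sin (d p.1)) := by
    have hpos : 0 < normSq (exp (s p.1)) := normSq_pos.2 (exp_ne_zero _)
    have hcross : cross (exp (s p.1)) (exp (s p.1) * p.2) = normSq (exp (s p.1)) * p.2.im := by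
      rw [← cross_one_left, ← cross_mul_mul, mul_one]
    have hpos' := mul_pos hpos (Real.exp_pos (t p.1 - s p.1).re)
    rw [hcross, cross_exp_mul_exp, cross_exp_exp_eq_normSq_mul, ← hd, mul_left_comm e,
      mul_left_comm f, mul_pos_iff_of_pos_left hpos', mul_pos_iff_of_pos_left hpos', neg_ne_zero,
      mul_ne_zero_iff_left hpos.ne', mul_ne_zero_iff_left hpos'.ne']
  have hcancel (k : E) (z : ℂ) : exp (s k) * (z / exp (s k)) = z :=
    mul_div_cancel₀ z (exp_ne_zero _)
  have hs : Continuous fun p : E × ℂ ↦ exp (s p.1) := (s.continuous.comp continuous_fst).cexp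
  refine (sep_or_and_or hK d he hf).of_retract
    (fun p ↦ (p.1, p.2 / exp (s p.1))) (fun p ↦ (p.1, exp (s p.1) * p.2)) ?_ ?_ ?_ ?_ ?_
  · exact (continuous_fst.prodMk (continuous_snd.div hs fun p ↦ exp_ne_zero _)).continuousOn
  · exact (continuous_fst.prodMk (hs.mul continuous_snd)).continuousOn
  · rintro p ⟨hp, h⟩
    exact ⟨hp, (hiff (p.1, p.2 / exp (s p.1))).1 (by simpa only [hcancel] using h)⟩
  · exact fun p hp ↦ ⟨hp.1, (hiff p).2 hp.2⟩
  · exact fun p _ ↦ Prod.ext rfl (hcancel _ _)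

theorem HomotopyDiscrete.sep_chain_chain_or (ha : a ≠ 0) (hb : b ≠ 0) {e f : ℝ} (he : e ≠ 0)
    (hf : f ≠ 0) :
    HomotopyDiscrete {p : (Fin m → ℂ) × (Fin n → ℂ) × ℂ | p.1 ∈ chain a m ∧ p.2.1 ∈ chain b n ∧
      (cross (vecCons a p.1 (Fin.last m)) p.2.2 ≠ 0 ∨
        0 < e * cross (vecCons a p.1 (Fin.last m)) (vecCons b p.2.1 (Fin.last n))) ∧
      (cross p.2.2 (vecCons b p.2.1 (Fin.last n)) ≠ 0 ∨
        0 < f * cross (vecCons a p.1 (Fin.last m)) (vecCons b p.2.1 (Fin.last n)))} := by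
  refine of_chain (R := {p : ℂ × (Fin n → ℂ) × ℂ | p.2.1 ∈ chain b n ∧
    (cross p.1 p.2.2 ≠ 0 ∨ 0 < e * cross p.1 (vecCons b p.2.1 (Fin.last n))) ∧
    (cross p.2.2 (vecCons b p.2.1 (Fin.last n)) ≠ 0 ∨
      0 < f * cross p.1 (vecCons b p.2.1 (Fin.last n)))}) ha fun K hK ↦ ?_
  have hswap := of_chain (n := n) (B := (Fin m → ℂ) × ℂ)
    (R := {p : ℂ × (Fin m → ℂ) × ℂ | p.2.1 ∈ K ∧
      (cross (exp (log a + ∑ i, p.2.1 i)) p.2.2 ≠ 0 ∨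
        0 < e * cross (exp (log a + ∑ i, p.2.1 i)) p.1) ∧
      (cross p.2.2 p.1 ≠ 0 ∨ 0 < f * cross (exp (log a + ∑ i, p.2.1 i)) p.1)}) hb fun L hL ↦ ?_
  · refine hswap.of_retract (fun p ↦ (p.2.1, p.1, p.2.2)) (fun p ↦ (p.2.1, p.1, p.2.2))
      (by fun_prop) (by fun_prop) ?_ ?_ fun p _ ↦ rfl
    · exact fun p hp ↦ ⟨hp.2.1, hp.1, hp.2.2⟩
    · exact fun p hp ↦ ⟨hp.2.1, hp.1, hp.2.2⟩
  · let s : (Fin n → ℂ) × (Fin m → ℂ) →ᴬ[ℝ] ℂ :=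
      ((∑ i, .proj i) ∘L .snd ℝ _ (Fin m → ℂ)).toContinuousAffineMap + .const ℝ _ (log a)
    let t : (Fin n → ℂ) × (Fin m → ℂ) →ᴬ[ℝ] ℂ :=
      ((∑ i, .proj i) ∘L .fst ℝ (Fin n → ℂ) _).toContinuousAffineMap + .const ℝ _ (log b)
    have hs (k) : s k = log a + ∑ i, k.2 i := by simp [s, add_comm]
    have ht (k) : t k = log b + ∑ i, k.1 i := by simp [t, add_comm]
    refine (sep_cross_ne_zero_or (hL.prod hK) s t he hf).of_retract
      (fun p ↦ ((p.1, p.2.1), p.2.2)) (fun p ↦ (p.1.1, p.1.2, p.2))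
      (by fun_prop) (by fun_prop) ?_ ?_ fun p _ ↦ rfl
    · exact fun p hp ↦ ⟨⟨hp.1, hp.2.1⟩, by simpa only [hs, ht] using hp.2.2⟩
    · exact fun p hp ↦ ⟨hp.1.1, hp.1.2, by simpa only [hs, ht] using hp.2⟩

theorem HomotopyDiscrete.chain_chain_cross_add_mul_ne_zero (ha : a ≠ 0) (hb : b ≠ 0) :
    HomotopyDiscrete {p : (((Fin m → ℂ) × (Fin n → ℂ) × ℂ) × ℝ) × ℝ |
      (p.1.1.1 ∈ chain a m ∧ p.1.1.2.1 ∈ chain b n) ∧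
      cross (vecCons a p.1.1.1 (Fin.last m)) (vecCons b p.1.1.2.1 (Fin.last n)) +
        p.1.2 * cross (vecCons a p.1.1.1 (Fin.last m)) p.1.1.2.2 ≠ 0 ∧
      cross (vecCons a p.1.1.1 (Fin.last m)) (vecCons b p.1.1.2.1 (Fin.last n)) +
        p.2 * cross p.1.1.2.2 (vecCons b p.1.1.2.1 (Fin.last n)) ≠ 0} := by
  have hlast (c : ℂ) (k : ℕ) : Continuous fun v : Fin k → ℂ ↦ vecCons c v (Fin.last k) := by
    fun_prop
  have hu : Continuous fun p : (Fin m → ℂ) × (Fin n → ℂ) × ℂ ↦ vecCons a p.1 (Fin.last m) :=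
    (hlast a m).comp continuous_fst
  have hv : Continuous fun p : (Fin m → ℂ) × (Fin n → ℂ) × ℂ ↦ vecCons b p.2.1 (Fin.last n) :=
    (hlast b n).comp (continuous_fst.comp continuous_snd)
  have hz : Continuous fun p : (Fin m → ℂ) × (Fin n → ℂ) × ℂ ↦ p.2.2 := by fun_prop
  have huv := continuous_cross.comp (hu.prodMk hv)
  refine add_mul_ne_zero₂ (S := {p | p.1 ∈ chain a m ∧ p.2.1 ∈ chain b n})
    (continuous_cross.comp (hu.prodMk hz)).continuousOn huv.continuousOn
    (continuous_cross.comp (hz.prodMk hv)).continuousOn huv.continuousOn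
    fun e he f hf ↦ ?_
  exact (sep_chain_chain_or ha hb he hf).congr_set fun p ↦ and_assoc

end Polygons

section TriangularFactors

open Set

variable {m : ℕ} {A L M U V : Matrix (Fin m) (Fin m) ℝ}

theorem mem_lo1_iff : L ∈ Lo1 m ↔ L.IsLowerTriangular ∧ ∀ i, L i i = 1 :=
  and_comm

theorem mem_upInv_iff : U ∈ UpInv m ↔ U.IsUpperTriangular ∧ IsUnit U.det :=
  Iff.rfl

theorem mul_mem_upInv (hU : U ∈ UpInv m) (hV : V ∈ UpInv m) : U * V ∈ UpInv m := by
  rw [mem_upInv_iff] at *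
  exact ⟨hU.1.mul hV.1, by simpa only [det_mul] using hU.2.mul hV.2⟩

theorem inv_mem_upInv (hU : U ∈ UpInv m) : U⁻¹ ∈ UpInv m := by
  have := invertibleOfIsUnitDet U hU.2
  exact mem_upInv_iff.2 ⟨blockTriangular_inv_of_blockTriangular (mem_upInv_iff.1 hU).1,
    isUnit_nonsing_inv_det U hU.2⟩

theorem det_eq_one_of_mem_lo1 (hL : L ∈ Lo1 m) : L.det = 1 := by
  rw [det_of_isLowerTriangular L (mem_lo1_iff.1 hL).1]
  exact Finset.prod_eq_one fun i _ ↦ hL.1 i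

theorem eq_of_mul_mem_lo1 (hL : L ∈ Lo1 m) (hU : U ∈ UpInv m) (h : L * U ∈ Lo1 m) :
    L * U = L := by
  have hdet : IsUnit L.det := by simp [det_eq_one_of_mem_lo1 hL]
  have := invertibleOfIsUnitDet L hdet
  have hlower : U.IsLowerTriangular := by
    rw [← nonsing_inv_mul_cancel_left L U hdet]
    exact (blockTriangular_inv_of_blockTriangular (mem_lo1_iff.1 hL).1).mul (mem_lo1_iff.1 h).1
  have hdiag : U = diagonal fun i ↦ U i i := by
    ext i j
    rcases lt_trichotomy i j with hij | rfl | hij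
    · rw [hlower hij, diagonal_apply_ne _ hij.ne]
    · rw [diagonal_apply_eq]
    · rw [hU.1 i j hij, diagonal_apply_ne _ hij.ne']
  have hone (i : Fin m) : U i i = 1 := by
    have hi := h.1 i
    rwa [hdiag, mul_diagonal, hL.1, one_mul] at hi
  rw [hdiag, funext hone, diagonal_one, mul_one]

/-- The block of the first `c + 1` rows and columns of `A`. -/
def leadingBlock (A : Matrix (Fin m) (Fin m) ℝ) (c : Fin m) :
    Matrix (Fin (c + 1)) (Fin (c + 1)) ℝ :=
  A.submatrix (Fin.castLE c.isLt) (Fin.castLE c.isLt)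

/-- Nonvanishing of the leading principal minors: the condition for `A` to be the product of a lower
and an upper triangular matrix. -/
def LeadingMinorsNeZero (A : Matrix (Fin m) (Fin m) ℝ) : Prop :=
  ∀ c, (leadingBlock A c).det ≠ 0

theorem leadingBlock_transpose (A : Matrix (Fin m) (Fin m) ℝ) (c : Fin m) :
    leadingBlock Aᵀ c = (leadingBlock A c)ᵀ :=
  rfl

theorem leadingMinorsNeZero_transpose : LeadingMinorsNeZero Aᵀ ↔ LeadingMinorsNeZero A := by
  simp only [LeadingMinorsNeZero, leadingBlock_transpose, det_transpose]

theorem sum_eq_sum_castLE {c : Fin m} {f : Fin m → ℝ} (hf : ∀ s, c < s → f s = 0) :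
    ∑ s, f s = ∑ s : Fin (c + 1), f (Fin.castLE c.isLt s) := by
  refine (Fintype.sum_of_injective (Fin.castLE c.isLt) (Fin.castLE_injective c.isLt) _ _
    (fun s hs ↦ hf s ?_) fun s ↦ rfl).symm
  rwa [Fin.range_castLE, mem_ofPred_eq, not_lt] at hs

theorem leadingBlock_mul (A : Matrix (Fin m) (Fin m) ℝ) (hU : U.IsUpperTriangular) (c : Fin m) :
    leadingBlock (A * U) c = leadingBlock A c * leadingBlock U c := by
  ext i j
  refine sum_eq_sum_castLE fun s hs ↦ mul_eq_zero_of_right _ (hU ?_)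
  exact (show Fin.castLE c.isLt j ≤ c from Nat.le_of_lt_succ j.isLt).trans_lt hs

theorem det_eq_prod_of_blockTriangular {ι α : Type*} [Fintype ι] [DecidableEq ι] [LinearOrder α]
    {M : Matrix ι ι ℝ} {b : ι → α} (hb : b.Injective) (hM : M.BlockTriangular b) :
    M.det = ∏ i, M i i := by
  rw [hM.det, Finset.prod_image hb.injOn]
  refine Finset.prod_congr rfl fun i _ ↦ ?_
  have : Subsingleton {j // b j = b i} := ⟨fun j k ↦ Subtype.ext (hb (j.2.trans k.2.symm))⟩
  exact det_eq_elem_of_subsingleton (M.toSquareBlock b (b i)) ⟨i, rfl⟩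

theorem leadingMinorsNeZero_of_blockTriangular {b : Fin m → Fin m} (hb : b.Injective)
    (hA : A.BlockTriangular b) (hdet : A.det ≠ 0) : LeadingMinorsNeZero A := fun c ↦ by
  rw [det_eq_prod_of_blockTriangular hb hA] at hdet
  rw [leadingBlock,
    det_eq_prod_of_blockTriangular (hb.comp (Fin.castLE_injective c.isLt)) hA.submatrix]
  exact Finset.prod_ne_zero_iff.2 fun i _ ↦
    Finset.prod_ne_zero_iff.1 hdet (Fin.castLE c.isLt i) (Finset.mem_univ _)

theorem LeadingMinorsNeZero.mul_upInv (hA : LeadingMinorsNeZero A) (hU : U ∈ UpInv m) :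
    LeadingMinorsNeZero (A * U) := fun c ↦ by
  rw [leadingBlock_mul A (mem_upInv_iff.1 hU).1, det_mul]
  exact mul_ne_zero (hA c) (leadingMinorsNeZero_of_blockTriangular Function.injective_id
    (mem_upInv_iff.1 hU).1 hU.2.ne_zero c)

theorem leadingMinorsNeZero_of_mem_lo1 (hL : L ∈ Lo1 m) : LeadingMinorsNeZero L :=
  leadingMinorsNeZero_transpose.1 (leadingMinorsNeZero_of_blockTriangular Function.injective_id
    (mem_lo1_iff.1 hL).1.transpose
    (by simp only [det_transpose, det_eq_one_of_mem_lo1 hL, ne_eq, one_ne_zero, not_false_eq_true]))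

/-- The upper triangular matrix `U` for which `A * U` is lower unitriangular. Its column `c` is the
last column of the inverse of the leading block of size `c + 1`. -/
noncomputable def upperFactorInv (A : Matrix (Fin m) (Fin m) ℝ) : Matrix (Fin m) (Fin m) ℝ :=
  of fun s c ↦ if h : s ≤ c then (leadingBlock A c)⁻¹ ⟨s, Nat.lt_succ_of_le h⟩ (Fin.last c) else 0

/-- The lower unitriangular factor `L` of the factorization `A = L * U`. -/
noncomputable def lowerFactor (A : Matrix (Fin m) (Fin m) ℝ) : Matrix (Fin m) (Fin m) ℝ :=
  A * upperFactorInv A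

theorem upperFactorInv_castLE (A : Matrix (Fin m) (Fin m) ℝ) (c : Fin m) (s : Fin (c + 1)) :
    upperFactorInv A (Fin.castLE c.isLt s) c = (leadingBlock A c)⁻¹ s (Fin.last c) :=
  dif_pos (Nat.le_of_lt_succ s.isLt)

theorem upperFactorInv_of_lt {s c : Fin m} (h : c < s) : upperFactorInv A s c = 0 :=
  dif_neg h.not_ge

theorem lowerFactor_castLE (hA : LeadingMinorsNeZero A) (c : Fin m) (i : Fin (c + 1)) :
    lowerFactor A (Fin.castLE c.isLt i) c = (1 : Matrix _ _ ℝ) i (Fin.last c) := by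
  rw [← mul_nonsing_inv (leadingBlock A c) (hA c).isUnit, lowerFactor, mul_apply, mul_apply,
    sum_eq_sum_castLE fun s hs ↦ mul_eq_zero_of_right _ (upperFactorInv_of_lt hs)]
  simp only [upperFactorInv_castLE]
  rfl

theorem lowerFactor_mem_lo1 (hA : LeadingMinorsNeZero A) : lowerFactor A ∈ Lo1 m := by
  refine ⟨fun c ↦ ?_, fun i c hic ↦ ?_⟩
  · exact (lowerFactor_castLE hA c (Fin.last c)).trans (one_apply_eq _)
  · exact (lowerFactor_castLE hA c ⟨i, Nat.lt_succ_of_lt hic⟩).trans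
      (one_apply_ne (Fin.ne_of_lt hic))

theorem upperFactorInv_mem_upInv (hA : LeadingMinorsNeZero A) : upperFactorInv A ∈ UpInv m := by
  refine ⟨fun s c hsc ↦ upperFactorInv_of_lt hsc, ?_⟩
  have hdet := det_eq_one_of_mem_lo1 (lowerFactor_mem_lo1 hA)
  rw [lowerFactor, det_mul] at hdet
  exact .of_mul_eq_one_right _ hdet

theorem lowerFactor_mul (hL : L ∈ Lo1 m) (hU : U ∈ UpInv m) : lowerFactor (L * U) = L := by
  have hA := (leadingMinorsNeZero_of_mem_lo1 hL).mul_upInv hU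
  have hmem := lowerFactor_mem_lo1 hA
  rw [lowerFactor, Matrix.mul_assoc] at hmem ⊢
  exact eq_of_mul_mem_lo1 hL (mul_mem_upInv hU (upperFactorInv_mem_upInv hA)) hmem

theorem lowerFactor_mul_upInv (hA : LeadingMinorsNeZero A) (hU : U ∈ UpInv m) :
    lowerFactor (A * U) = lowerFactor A := by
  have hT := upperFactorInv_mem_upInv hA
  rw [← lowerFactor_mul (lowerFactor_mem_lo1 hA) (mul_mem_upInv (inv_mem_upInv hT) hU),
    ← Matrix.mul_assoc, lowerFactor.eq_def A, mul_nonsing_inv_cancel_right _ _ hT.2]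

theorem blockTriangular_lowerFactor {b : Fin m → Fin m} (hA : A.BlockTriangular b)
    (hminors : LeadingMinorsNeZero A) : (lowerFactor A).BlockTriangular b := by
  refine hA.mul fun s c hsc ↦ ?_
  by_cases h : s ≤ c
  · have := invertibleOfIsUnitDet _ (hminors c).isUnit
    have hinv : (leadingBlock A c)⁻¹.BlockTriangular (b ∘ Fin.castLE c.isLt) :=
      blockTriangular_inv_of_blockTriangular hA.submatrix
    exact (upperFactorInv_castLE A c ⟨s, Nat.lt_succ_of_le h⟩).trans (hinv hsc)
  · exact upperFactorInv_of_lt (not_le.1 h)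

theorem continuousOn_lowerFactor :
    ContinuousOn (lowerFactor (m := m)) {A | LeadingMinorsNeZero A} := by
  have hblock (c : Fin m) : Continuous fun A : Matrix (Fin m) (Fin m) ℝ ↦ leadingBlock A c :=
    continuous_id.matrix_submatrix _ _
  have hinv (c : Fin m) : ContinuousOn
      (fun A : Matrix (Fin m) (Fin m) ℝ ↦ (leadingBlock A c)⁻¹) {A | LeadingMinorsNeZero A} := by
    simp only [inv_def, Ring.inverse_eq_inv']
    exact ((hblock c).matrix_det.continuousOn.inv₀ fun A (hA : LeadingMinorsNeZero A) ↦ hA c).smul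
      (hblock c).matrix_adjugate.continuousOn
  have hT : ContinuousOn (upperFactorInv (m := m)) {A | LeadingMinorsNeZero A} := by
    refine continuousOn_pi.2 fun s ↦ continuousOn_pi.2 fun c ↦ ?_
    by_cases h : s ≤ c
    · simp only [upperFactorInv, of_apply, h, dite_true]
      exact continuousOn_pi.1 (continuousOn_pi.1 (hinv c) _) _
    · simp only [upperFactorInv_of_lt (not_le.1 h)]
      exact continuousOn_const
  exact continuousOn_id.mul hT

end TriangularFactors

section NormalForms

open Set

variable {m : ℕ} {w : Equiv.Perm (Fin m)} {L M : Matrix (Fin m) (Fin m) ℝ}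

theorem mul_permMat (w : Equiv.Perm (Fin m)) (M : Matrix (Fin m) (Fin m) ℝ) :
    M * permMat m w = M.submatrix id w.symm := by
  ext i j
  simp [permMat, mul_apply, ← Equiv.eq_symm_apply]

theorem submatrix_id_mul (e : Fin m → Fin m) (A B : Matrix (Fin m) (Fin m) ℝ) :
    (A * B).submatrix e id = A.submatrix e id * B :=
  rfl

/-- The matrices that agree with the permutation matrix of `w` except at the inversions of `w`. -/
def permPattern (w : Equiv.Perm (Fin m)) : Set (Matrix (Fin m) (Fin m) ℝ) :=
  {M | (∀ i, M i (w i) = 1) ∧ ∀ i j, w i < j ∨ w.symm j < i → M i j = 0}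

/-- The matrices that represent the cosets `L * U`, `U` invertible and upper triangular, of the
matrices `L ∈ BL m w`: they agree with the permutation matrix of `w` except at the inversions of
`w`, and their leading principal minors do not vanish. -/
def normalForms (w : Equiv.Perm (Fin m)) : Set (Matrix (Fin m) (Fin m) ℝ) :=
  {M ∈ permPattern w | LeadingMinorsNeZero M}

/-- The normal form of `L ∈ BL m w`: its rows are the rows of the lower unitriangular factor of
`L` with rows permuted by `w`. -/
noncomputable def normalForm (w : Equiv.Perm (Fin m)) (L : Matrix (Fin m) (Fin m) ℝ) :
    Matrix (Fin m) (Fin m) ℝ :=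
  (lowerFactor (L.submatrix w.symm id)).submatrix w id

theorem exists_of_mem_bru (hL : L ∈ Bru m w) :
    ∃ Y : Matrix (Fin m) (Fin m) ℝ, Y.BlockTriangular w.symm ∧ LeadingMinorsNeZero Y ∧
      ∃ V ∈ UpInv m, L.submatrix w.symm id = Y * V := by
  obtain ⟨U, hU, V, hV, rfl⟩ := hL
  have hY : (U.submatrix w.symm w.symm).BlockTriangular w.symm := (mem_upInv_iff.1 hU).1.submatrix
  have hdet : (U.submatrix w.symm w.symm).det ≠ 0 := by
    rw [det_submatrix_equiv_self]
    exact hU.2.ne_zero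
  refine ⟨_, hY, leadingMinorsNeZero_of_blockTriangular w.symm.injective hY hdet, V, hV, ?_⟩
  rw [mul_permMat]
  rfl

theorem leadingMinorsNeZero_of_mem_bru (hL : L ∈ Bru m w) :
    LeadingMinorsNeZero (L.submatrix w.symm id) := by
  obtain ⟨Y, -, hY, V, hV, h⟩ := exists_of_mem_bru hL
  exact h ▸ hY.mul_upInv hV

theorem submatrix_submatrix_symm (w : Equiv.Perm (Fin m)) (M : Matrix (Fin m) (Fin m) ℝ) :
    (M.submatrix w.symm id).submatrix w id = M := by
  simp

theorem exists_normalForm_eq_mul (hL : L ∈ Bru m w) : ∃ U ∈ UpInv m, normalForm w L = L * U := by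
  have hT := upperFactorInv_mem_upInv (leadingMinorsNeZero_of_mem_bru hL)
  exact ⟨_, hT, by rw [normalForm, lowerFactor, submatrix_id_mul, submatrix_submatrix_symm]⟩

theorem normalForm_mem_normalForms (hL : L ∈ BL m w) : normalForm w L ∈ normalForms w := by
  obtain ⟨U, hU, h⟩ := exists_normalForm_eq_mul hL.2
  refine ⟨⟨fun i ↦ ?_, fun i j hij ↦ ?_⟩, ?_⟩
  · exact (lowerFactor_mem_lo1 (leadingMinorsNeZero_of_mem_bru hL.2)).1 (w i)
  · rcases hij with hij | hij
    · exact (lowerFactor_mem_lo1 (leadingMinorsNeZero_of_mem_bru hL.2)).2 (w i) j hij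
    · obtain ⟨Y, hYw, hY, V, hV, hLY⟩ := exists_of_mem_bru hL.2
      rw [normalForm, hLY, lowerFactor_mul_upInv hY hV]
      exact blockTriangular_lowerFactor hYw hY (by simpa using hij)
  · rw [h]
    exact (leadingMinorsNeZero_of_mem_lo1 hL.1).mul_upInv hU

theorem lowerFactor_normalForm (hL : L ∈ BL m w) : lowerFactor (normalForm w L) = L := by
  obtain ⟨U, hU, h⟩ := exists_normalForm_eq_mul hL.2
  rw [h, lowerFactor_mul hL.1 hU]

theorem submatrix_mem_upInv_of_mem_permPattern (hM : M ∈ permPattern w) :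
    M.submatrix id w ∈ UpInv m := by
  have hU : (M.submatrix id w).IsUpperTriangular := fun i j hij ↦ hM.2 i (w j) (.inr (by simpa))
  exact mem_upInv_iff.2 ⟨hU, by simp [det_of_isUpperTriangular hU, hM.1]⟩

theorem lowerFactor_mem_BL (hM : M ∈ normalForms w) : lowerFactor M ∈ BL m w := by
  refine ⟨lowerFactor_mem_lo1 hM.2, M.submatrix id w,
    submatrix_mem_upInv_of_mem_permPattern hM.1, _, upperFactorInv_mem_upInv hM.2, ?_⟩
  rw [mul_permMat, submatrix_submatrix]
  simp [lowerFactor]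

theorem normalForm_lowerFactor (hM : M ∈ normalForms w) : normalForm w (lowerFactor M) = M := by
  obtain ⟨⟨hone, hzero⟩, hminors⟩ := hM
  have hlo : M.submatrix w.symm id ∈ Lo1 m :=
    ⟨fun i ↦ by simpa using hone (w.symm i), fun i j hij ↦ hzero _ j (.inl (by simpa))⟩
  rw [normalForm, lowerFactor.eq_def M, submatrix_id_mul,
    lowerFactor_mul hlo (upperFactorInv_mem_upInv hminors), submatrix_submatrix_symm]

theorem continuousOn_normalForm : ContinuousOn (normalForm w) (BL m w) :=
  (continuous_id.matrix_submatrix w id).comp_continuousOn (continuousOn_lowerFactor.comp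
    (continuous_id.matrix_submatrix w.symm id).continuousOn fun _ hL ↦
      leadingMinorsNeZero_of_mem_bru hL.2)

theorem homotopyDiscrete_BL_iff : HomotopyDiscrete (BL m w) ↔ HomotopyDiscrete (normalForms w) :=
  ⟨fun h ↦ h.of_retract lowerFactor (normalForm w) (continuousOn_lowerFactor.mono fun _ hM ↦ hM.2)
      continuousOn_normalForm (fun _ ↦ lowerFactor_mem_BL) (fun _ ↦ normalForm_mem_normalForms)
      fun _ ↦ normalForm_lowerFactor,
    fun h ↦ h.of_retract (normalForm w) lowerFactor continuousOn_normalForm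
      (continuousOn_lowerFactor.mono fun _ hM ↦ hM.2) (fun _ ↦ normalForm_mem_normalForms)
      (fun _ ↦ lowerFactor_mem_BL) fun _ ↦ lowerFactor_normalForm⟩

theorem transpose_mem_normalForms (hM : M ∈ normalForms w) : Mᵀ ∈ normalForms w⁻¹ := by
  refine ⟨⟨fun i ↦ ?_, fun i j hij ↦ hM.1.2 j i hij.symm⟩, leadingMinorsNeZero_transpose.2 hM.2⟩
  simpa using hM.1.1 (w⁻¹ i)

theorem HomotopyDiscrete.normalForms_of_inv (h : HomotopyDiscrete (normalForms w⁻¹)) :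
    HomotopyDiscrete (normalForms w) :=
  h.of_retract transpose transpose (by fun_prop) (by fun_prop)
    (fun _ ↦ transpose_mem_normalForms)
    (fun _ hM ↦ inv_inv w ▸ transpose_mem_normalForms hM) fun _ _ ↦ rfl

/-- The conjugate of `w` by the order-reversing permutation. -/
def revConj (w : Equiv.Perm (Fin m)) : Equiv.Perm (Fin m) :=
  Fin.revPerm * w * Fin.revPerm

theorem revConj_apply (w : Equiv.Perm (Fin m)) (i : Fin m) : revConj w i = (w i.rev).rev :=
  rfl

theorem antitranspose_mul (A B : Matrix (Fin m) (Fin m) ℝ) :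
    (A * B)ᵀ.submatrix Fin.rev Fin.rev =
      Bᵀ.submatrix Fin.rev Fin.rev * Aᵀ.submatrix Fin.rev Fin.rev := by
  rw [transpose_mul]
  exact (submatrix_mul_equiv _ _ Fin.rev Fin.revPerm Fin.rev).symm

theorem antitranspose_mem_upInv {U : Matrix (Fin m) (Fin m) ℝ} (hU : U ∈ UpInv m) :
    Uᵀ.submatrix Fin.rev Fin.rev ∈ UpInv m := by
  have hdet : (Uᵀ.submatrix Fin.rev Fin.rev).det = U.det :=
    (det_submatrix_equiv_self Fin.revPerm Uᵀ).trans (det_transpose U)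
  exact ⟨fun i j hij ↦ hU.1 _ _ (Fin.rev_lt_rev.2 hij), hdet ▸ hU.2⟩

theorem antitranspose_mem_BL (hL : L ∈ BL m w) :
    Lᵀ.submatrix Fin.rev Fin.rev ∈ BL m (revConj w⁻¹) := by
  obtain ⟨⟨hone, hzero⟩, U, hU, V, hV, rfl⟩ := hL
  refine ⟨⟨fun i ↦ hone _, fun i j hij ↦ hzero _ _ (Fin.rev_lt_rev.2 hij)⟩, _,
    antitranspose_mem_upInv hV, _, antitranspose_mem_upInv hU, ?_⟩
  rw [antitranspose_mul, antitranspose_mul, Matrix.mul_assoc]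
  congr 2
  ext i j
  have hij : w j.rev = i.rev ↔ revConj w⁻¹ i = j := by
    rw [revConj_apply, ← Equiv.Perm.eq_inv_iff_eq, eq_comm, Fin.rev_eq_iff]
  simp only [permMat, submatrix_apply, transpose_apply]
  exact if_congr hij rfl rfl

theorem revConj_inv_revConj_inv (w : Equiv.Perm (Fin m)) : revConj (revConj w⁻¹)⁻¹ = w := by
  ext i
  simp [revConj]

theorem HomotopyDiscrete.normalForms_of_revConj (h : HomotopyDiscrete (normalForms (revConj w))) :
    HomotopyDiscrete (normalForms w) := by
  have hinv : (revConj w⁻¹)⁻¹ = revConj w := by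
    simp only [revConj, _root_.mul_inv_rev, inv_inv, mul_assoc]
    rfl
  have hBL := homotopyDiscrete_BL_iff.2 (normalForms_of_inv (hinv ▸ h))
  refine homotopyDiscrete_BL_iff.1 (hBL.of_retract (fun L ↦ Lᵀ.submatrix Fin.rev Fin.rev)
    (fun L ↦ Lᵀ.submatrix Fin.rev Fin.rev) (by fun_prop) (by fun_prop)
    (fun _ ↦ antitranspose_mem_BL)
    (fun _ hL ↦ revConj_inv_revConj_inv w ▸ antitranspose_mem_BL hL) fun L _ ↦ ?_)
  ext i j
  simp

end NormalForms

section Pivots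

open Set

variable {R : Type*} [CommRing R] {m n : ℕ}

/-- The Schur complement of the entry `(p, q)` of `A`, when that entry is `1`. -/
def schurCompl (p q : Fin (n + 1)) (A : Matrix (Fin (n + 1)) (Fin (n + 1)) R) :
    Matrix (Fin n) (Fin n) R :=
  of fun i j ↦ A (p.succAbove i) (q.succAbove j) - A (p.succAbove i) q * A p (q.succAbove j)

theorem det_eq_mul_det_schurCompl {p q : Fin (n + 1)} {A : Matrix (Fin (n + 1)) (Fin (n + 1)) R}
    (hA : A p q = 1) : A.det = (-1) ^ (p + q : ℕ) * (schurCompl p q A).det := by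
  have hrow : A.det = (of (p.insertNth (A p) (fun i ↦
      A (p.succAbove i) - A (p.succAbove i) q • A p) : Fin (n + 1) → Fin (n + 1) → R)).det := by
    refine det_eq_of_forall_row_eq_smul_add_const (fun i ↦ if i = p then 0 else A i q) p
      (by simp) fun i j ↦ ?_
    rcases eq_or_ne i p with rfl | hi
    · simp
    · obtain ⟨i, rfl⟩ := Fin.exists_succAbove_eq hi
      simp
  rw [hrow, det_succ_column _ q, Fin.sum_univ_succAbove _ p]
  have hsub : (of (p.insertNth (A p) (fun i ↦ A (p.succAbove i) - A (p.succAbove i) q • A p) :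
      Fin (n + 1) → Fin (n + 1) → R)).submatrix p.succAbove q.succAbove = schurCompl p q A := by
    ext i j
    simp [schurCompl]
  simp [hA, hsub]

theorem castLE_succAbove (h : n + 1 ≤ m + 1) (p : Fin (n + 1)) (i : Fin n) :
    Fin.castLE h (p.succAbove i) =
      (Fin.castLE h p).succAbove (Fin.castLE (Nat.le_of_succ_le_succ h) i) := by
  ext
  simp only [Fin.succAbove, Fin.lt_def, Fin.val_castLE, Fin.val_castSucc]
  split_ifs <;> simp

theorem LeadingMinorsNeZero.apply_zero_zero {A : Matrix (Fin (n + 1)) (Fin (n + 1)) ℝ}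
    (hA : LeadingMinorsNeZero A) : A 0 0 ≠ 0 := by
  have hdet : (leadingBlock A 0).det = A 0 0 := det_fin_one _
  exact hdet ▸ hA 0

theorem leadingMinorsNeZero_iff_schurCompl {p q : Fin (n + 2)} (hp : p ≤ 1) (hq : q ≤ 1)
    {A : Matrix (Fin (n + 2)) (Fin (n + 2)) ℝ} (hA : A p q = 1) :
    LeadingMinorsNeZero A ↔ A 0 0 ≠ 0 ∧ LeadingMinorsNeZero (schurCompl p q A) := by
  rw [LeadingMinorsNeZero, Fin.forall_fin_succ]
  have hzero : (leadingBlock A 0).det = A 0 0 := det_fin_one _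
  refine and_congr (hzero ▸ Iff.rfl) (forall_congr' fun c ↦ ?_)
  obtain ⟨p, rfl⟩ : ∃ p' : Fin (c + 2), Fin.castLE c.succ.isLt p' = p :=
    ⟨⟨p, by have : p.val ≤ 1 := hp; omega⟩, rfl⟩
  obtain ⟨q, rfl⟩ : ∃ q' : Fin (c + 2), Fin.castLE c.succ.isLt q' = q :=
    ⟨⟨q, by have : q.val ≤ 1 := hq; omega⟩, rfl⟩
  have hblock : schurCompl p q (leadingBlock A c.succ) =
      leadingBlock (schurCompl (Fin.castLE c.succ.isLt p) (Fin.castLE c.succ.isLt q) A) c := by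
    ext i j
    simp only [schurCompl, leadingBlock, of_apply, submatrix_apply]
    rw [← castLE_succAbove, ← castLE_succAbove]
  have hdet : (leadingBlock A c.succ).det = _ := det_eq_mul_det_schurCompl (p := p) (q := q) hA
  rw [hdet, hblock]
  simp

variable {w : Equiv.Perm (Fin (n + 1))} {w' : Equiv.Perm (Fin n)} {p : Fin (n + 1)}
  {M : Matrix (Fin (n + 1)) (Fin (n + 1)) ℝ} {N : Matrix (Fin n) (Fin n) ℝ}

theorem exists_perm_succAbove (w : Equiv.Perm (Fin (n + 1))) (p : Fin (n + 1)) :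
    ∃ w' : Equiv.Perm (Fin n), ∀ i, w (p.succAbove i) = (w p).succAbove (w' i) := by
  have hex (i : Fin n) : ∃ j, (w p).succAbove j = w (p.succAbove i) :=
    Fin.exists_succAbove_eq fun h ↦ p.succAbove_ne i (w.injective h)
  choose f hf using hex
  have hinj : Function.Injective f := fun i j hij ↦
    Fin.succAbove_right_injective (w.injective (by rw [← hf i, ← hf j, hij]))
  exact ⟨.ofBijective f (Finite.injective_iff_bijective.1 hinj), fun i ↦ (hf i).symm⟩

theorem mul_eq_zero_of_mem_normalForms (hM : M ∈ normalForms w) {i j : Fin (n + 1)} (hi : i ≠ p)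
    (hij : w i ≤ j ∨ w.symm j ≤ i) : M i (w p) * M p j = 0 := by
  by_contra hne
  obtain ⟨hip, hpj⟩ := mul_ne_zero_iff.1 hne
  have h₁ := mt (hM.1.2 i (w p)) hip
  have h₂ := mt (hM.1.2 p j) hpj
  rw [Equiv.symm_apply_apply] at h₁
  push Not at h₁ h₂
  rcases hij with hij | hij
  · exact hi (w.injective (le_antisymm (hij.trans h₂.1) h₁.1))
  · exact hi (le_antisymm h₁.2 (h₂.2.trans hij))

theorem symm_succAbove (hw' : ∀ i, w (p.succAbove i) = (w p).succAbove (w' i)) (j : Fin n) :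
    w.symm ((w p).succAbove j) = p.succAbove (w'.symm j) := by
  rw [Equiv.symm_apply_eq, hw', Equiv.apply_symm_apply]

/-- The matrix whose entry at `(p, q)` is `1`, whose Schur complement there is `N`, and whose other
entries in column `q` and row `p` are `b` above the pivot, `e` to its left, and `0` elsewhere. -/
def insertPivot (p q : Fin (n + 1)) (N : Matrix (Fin n) (Fin n) ℝ) (b e : ℝ) :
    Matrix (Fin (n + 1)) (Fin (n + 1)) ℝ :=
  of <| p.insertNth (q.insertNth 1 fun j ↦ if q.succAbove j < q then e else 0) fun i ↦
    q.insertNth (if p.succAbove i < p then b else 0) fun j ↦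
      N i j + (if p.succAbove i < p then b else 0) * (if q.succAbove j < q then e else 0)

theorem schurCompl_insertPivot (p q : Fin (n + 1)) (N : Matrix (Fin n) (Fin n) ℝ) (b e : ℝ) :
    schurCompl p q (insertPivot p q N b e) = N := by
  ext i j
  simp [schurCompl, insertPivot]

theorem ite_lt_eq_of_mem_normalForms (hM : M ∈ normalForms w) (hq : (w p).val ≤ 1) (j : Fin n) :
    (if (w p).succAbove j < w p then M p 0 else 0) = M p ((w p).succAbove j) := by
  split_ifs with h
  · rw [show (w p).succAbove j = 0 from Fin.ext (by simp only [Fin.lt_def] at h; grind)]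
  · exact (hM.1.2 _ _ (.inl (((w p).succAbove_ne j).lt_or_gt.resolve_left h))).symm

theorem insertPivot_schurCompl (hM : M ∈ normalForms w) (hp : p.val ≤ 1) (hq : (w p).val ≤ 1) :
    insertPivot p (w p) (schurCompl p (w p) M) (M 0 (w p)) (M p 0) = M := by
  have hrow := ite_lt_eq_of_mem_normalForms hM hq
  have hcol (i : Fin n) :
      (if p.succAbove i < p then M 0 (w p) else 0) = M (p.succAbove i) (w p) := by
    simpa using ite_lt_eq_of_mem_normalForms (p := w p) (transpose_mem_normalForms hM)
      (by simpa using hp) i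
  ext i j
  induction i using p.succAboveCases with
  | x => induction j using (w p).succAboveCases with
    | x => simp [insertPivot, hM.1.1]
    | p j => simp [insertPivot, hrow]
  | p i => induction j using (w p).succAboveCases with
    | x => simp [insertPivot, hcol]
    | p j => simp [insertPivot, schurCompl, hrow, hcol]

theorem schurCompl_mem_normalForms (hw' : ∀ i, w (p.succAbove i) = (w p).succAbove (w' i))
    (hM : M ∈ normalForms w) (hminors : LeadingMinorsNeZero (schurCompl p (w p) M)) :
    schurCompl p (w p) M ∈ normalForms w' := by
  refine ⟨⟨fun i ↦ ?_, fun i j hij ↦ ?_⟩, hminors⟩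
  · have hmul := mul_eq_zero_of_mem_normalForms hM (p.succAbove_ne i) (.inl le_rfl)
    rw [schurCompl, of_apply, ← hw', hmul, hM.1.1, sub_zero]
  · replace hij : w (p.succAbove i) < (w p).succAbove j ∨
        w.symm ((w p).succAbove j) < p.succAbove i := by
      simpa [hw', symm_succAbove hw', Fin.succAbove_lt_succAbove_iff] using hij
    have hmul := mul_eq_zero_of_mem_normalForms hM (p.succAbove_ne i) (hij.imp le_of_lt le_of_lt)
    rw [schurCompl, of_apply, hmul, hM.1.2 _ _ hij, sub_zero]

theorem ite_lt_mul_ite_lt_eq_zero (hw' : ∀ i, w (p.succAbove i) = (w p).succAbove (w' i))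
    (hp : ∀ i < p, w p < w i) (hq : ∀ j < w p, p < w.symm j) (b e : ℝ) {i j : Fin n}
    (hij : w' i ≤ j ∨ w'.symm j ≤ i) :
    (if p.succAbove i < p then b else 0) * (if (w p).succAbove j < w p then e else 0) = 0 := by
  by_contra hne
  obtain ⟨hi, hj⟩ : p.succAbove i < p ∧ (w p).succAbove j < w p := by simp_all
  have hpi := hw' i ▸ hp _ hi
  have hqj := symm_succAbove hw' j ▸ hq _ hj
  rcases hij with hij | hij
  · exact (hpi.trans_le (Fin.succAbove_le_succAbove_iff.2 hij)).not_gt hj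
  · exact (hqj.trans_le (Fin.succAbove_le_succAbove_iff.2 hij)).not_gt hi

theorem insertPivot_mem_normalForms (hw' : ∀ i, w (p.succAbove i) = (w p).succAbove (w' i))
    (hp : ∀ i < p, w p < w i) (hq : ∀ j < w p, p < w.symm j) (hN : N ∈ normalForms w') {b e : ℝ}
    (hminors : LeadingMinorsNeZero (insertPivot p (w p) N b e)) :
    insertPivot p (w p) N b e ∈ normalForms w := by
  have hmul {i j : Fin n} (hij : w' i ≤ j ∨ w'.symm j ≤ i) :=
    ite_lt_mul_ite_lt_eq_zero hw' hp hq b e hij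
  refine ⟨⟨fun i ↦ ?_, fun i j ↦ ?_⟩, hminors⟩
  · induction i using p.succAboveCases with
    | x => simp [insertPivot]
    | p i => simp only [insertPivot, hw', of_apply, Fin.insertNth_apply_succAbove, hN.1.1,
        hmul (.inl le_rfl), add_zero]
  · induction i using p.succAboveCases with
    | x => induction j using (w p).succAboveCases with
      | x => simp
      | p j =>
        intro hij
        have hj : ¬(w p).succAbove j < w p := fun h ↦ hij.elim h.not_gt (hq _ h).not_gt
        simp [insertPivot, hj]
    | p i => induction j using (w p).succAboveCases with
      | x =>
        rw [Equiv.symm_apply_apply]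
        intro hij
        have hi : ¬p.succAbove i < p := fun h ↦ hij.elim (hp _ h).not_gt h.not_gt
        simp [insertPivot, hi]
      | p j =>
        rw [hw', symm_succAbove hw', Fin.succAbove_lt_succAbove_iff, Fin.succAbove_lt_succAbove_iff]
        intro hij
        simp only [insertPivot, of_apply, Fin.insertNth_apply_succAbove, hN.1.2 i j hij,
          hmul (hij.imp le_of_lt le_of_lt), add_zero]

variable {w : Equiv.Perm (Fin (n + 2))} {N : Matrix (Fin (n + 1)) (Fin (n + 1)) ℝ} {b e : ℝ}
  {w' : Equiv.Perm (Fin (n + 1))} {p q : Fin (n + 2)}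

theorem insertPivot_zero_one : insertPivot 0 1 N b e 0 0 = e := by
  change insertPivot 0 1 N b e 0 (Fin.succAbove 1 0) = e
  simp only [insertPivot, of_apply, Fin.insertNth_apply_same, Fin.insertNth_apply_succAbove]
  rfl

theorem insertPivot_one_zero : insertPivot 1 0 N b e 0 0 = b := by
  change insertPivot 1 0 N b e (Fin.succAbove 1 0) 0 = b
  simp only [insertPivot, of_apply, Fin.insertNth_apply_same, Fin.insertNth_apply_succAbove]
  rfl

theorem insertPivot_one_one : insertPivot 1 1 N b e 0 0 = N 0 0 + b * e := by
  change insertPivot 1 1 N b e (Fin.succAbove 1 0) (Fin.succAbove 1 0) = N 0 0 + b * e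
  simp only [insertPivot, of_apply, Fin.insertNth_apply_succAbove]
  rfl

theorem HomotopyDiscrete.insertPivot_ne_zero (hp : p ≤ 1) (hq : q ≤ 1)
    (h : HomotopyDiscrete (normalForms w')) :
    HomotopyDiscrete {x : (Matrix (Fin (n + 1)) (Fin (n + 1)) ℝ × ℝ) × ℝ |
      x.1.1 ∈ normalForms w' ∧ insertPivot p q x.1.1 x.1.2 x.2 0 0 ≠ 0} := by
  have huniv : HomotopyDiscrete (univ : Set ℝ) := .of_convex convex_univ
  have hcases {i : Fin (n + 2)} (hi : i ≤ 1) : i = 0 ∨ i = 1 := by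
    rw [Fin.le_def, Fin.val_one] at hi
    exact (Nat.le_one_iff_eq_zero_or_eq_one.1 hi).imp Fin.ext Fin.ext
  rcases hcases hp with rfl | rfl <;> rcases hcases hq with rfl | rfl
  · refine ((h.setProd huniv).setProd huniv).congr_set fun x ↦ ?_
    simp [insertPivot]
  · refine ((h.setProd huniv).setProd .ne_zero).congr_set fun x ↦ ?_
    simp [insertPivot_zero_one]
  · refine ((h.setProd .ne_zero).setProd huniv).congr_set fun x ↦ ?_
    simp [insertPivot_one_zero]
  · refine (h.add_mul_mul_ne_zero (b := fun N ↦ N 0 0) (by fun_prop) fun N hN ↦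
      hN.2.apply_zero_zero).congr_set fun x ↦ ?_
    simp [insertPivot_one_one, mul_comm]

theorem continuous_insertPivot :
    Continuous fun x : (Matrix (Fin (n + 1)) (Fin (n + 1)) ℝ × ℝ) × ℝ ↦
      insertPivot p q x.1.1 x.1.2 x.2 := by
  have hite (P : Prop) [Decidable P] : Continuous fun x : ℝ ↦ if P then x else 0 := by
    split_ifs <;> fun_prop
  unfold insertPivot
  fun_prop

theorem HomotopyDiscrete.normalForms_of_pivot (hp : p ≤ 1) (hwp : w p ≤ 1)
    (hp' : ∀ i < p, w p < w i) (hq' : ∀ j < w p, p < w.symm j)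
    (h : ∀ w' : Equiv.Perm (Fin (n + 1)), HomotopyDiscrete (normalForms w')) :
    HomotopyDiscrete (normalForms w) := by
  obtain ⟨w', hw'⟩ := exists_perm_succAbove w p
  refine (HomotopyDiscrete.insertPivot_ne_zero hp hwp (h w')).of_retract
    (fun M ↦ ((schurCompl p (w p) M, M 0 (w p)), M p 0))
    (fun x ↦ insertPivot p (w p) x.1.1 x.1.2 x.2) (by unfold schurCompl; fun_prop)
    continuous_insertPivot.continuousOn (fun M hM ↦ ?_) (fun x hx ↦ ?_) fun M hM ↦ ?_
  · have hminors := (leadingMinorsNeZero_iff_schurCompl hp hwp (hM.1.1 p)).1 hM.2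
    refine ⟨schurCompl_mem_normalForms hw' hM hminors.2, ?_⟩
    rw [insertPivot_schurCompl hM hp hwp]
    exact hminors.1
  · refine insertPivot_mem_normalForms hw' hp' hq' hx.1 ?_
    rw [leadingMinorsNeZero_iff_schurCompl hp hwp (by simp [insertPivot]), schurCompl_insertPivot]
    exact ⟨hx.2, hx.1.2⟩
  · exact insertPivot_schurCompl hM hp hwp

theorem apply_lt_apply_of_lt (hw : w 0 ≠ 0) (hp : p ≤ 1) (hwp : w p ≤ 1) {i : Fin (n + 2)}
    (hi : i < p) : w p < w i := by
  have hne : w i ≠ w p := w.injective.ne hi.ne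
  obtain rfl : i = 0 := Fin.ext (by simp only [Fin.lt_def, Fin.le_def, Fin.val_one] at hi hp; grind)
  simp only [Fin.lt_def, Fin.le_def, Fin.val_one, ne_eq, Fin.ext_iff, Fin.val_zero] at *
  omega

theorem HomotopyDiscrete.normalForms_of_pivot_corner (hp : p ≤ 1) (hwp : w p ≤ 1)
    (h : ∀ w' : Equiv.Perm (Fin (n + 1)), HomotopyDiscrete (normalForms w')) :
    HomotopyDiscrete (normalForms w) := by
  by_cases hw : w 0 = 0
  · exact normalForms_of_pivot (p := 0) (Fin.zero_le _) (hw.le.trans (Fin.zero_le _)) (by simp)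
      (by simp [hw]) h
  · have hw' : w.symm 0 ≠ 0 := fun h ↦ hw (by rw [← h, Equiv.apply_symm_apply, h])
    refine normalForms_of_pivot hp hwp (fun i ↦ apply_lt_apply_of_lt hw hp hwp) (fun j hj ↦ ?_) h
    simpa using apply_lt_apply_of_lt hw' hwp (by simpa using hp) hj

theorem HomotopyDiscrete.normalForms_of_subsingleton {n : ℕ} [Subsingleton (Fin n)]
    (w : Equiv.Perm (Fin n)) : HomotopyDiscrete (normalForms w) := by
  refine .of_convex (Set.Subsingleton.convex fun M hM N hN ↦ ?_)
  ext i j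
  rw [Subsingleton.elim j (w i), hM.1.1, hN.1.1]

end Pivots

section BlockForms

open Set Complex

variable {k : ℕ} {w : Equiv.Perm (Fin (k + 2))} {u : Equiv.Perm (Fin k)} {X : Fin k → ℂ}
  {A : Matrix (Fin k) (Fin k) ℝ} {c : ℂ}

/-- The matrices in the pattern of a permutation of `Fin (k + 2)` whose last two values are `0` and
`1`. A vector `(s, t)` of the first two columns is encoded as `s + t * I`: `X` lists the first `k`
rows and `c` is the next one, which determines the last one. The other columns of the first `k`
rows form the matrix `A`. -/
def blockForm (X : Fin k → ℂ) (A : Matrix (Fin k) (Fin k) ℝ) (c : ℂ) :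
    Matrix (Fin (k + 2)) (Fin (k + 2)) ℝ :=
  of <| Fin.snoc (α := fun _ ↦ Fin (k + 2) → ℝ)
    (Fin.snoc (α := fun _ ↦ Fin (k + 2) → ℝ)
      (fun i ↦ vecCons (X i).re (vecCons (X i).im (A i))) (vecCons c.re (vecCons c.im 0)))
    (vecCons c.im (vecCons (1 - c.im) 0))

/-- The values of `c` for which `blockForm X A c` fits the pattern of a permutation that maps the
next-to-last index to `j`. -/
def pivotRows (j : Fin (k + 2)) : Set ℂ :=
  if j = 0 then {1} else {c | c.im = 1}

theorem pivotRows_eq_or (j : Fin (k + 2)) :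
    pivotRows j = {1} ∨ pivotRows j = {c | c.im = 1} :=
  ite_eq_or_eq _ _ _

theorem apply_last_of_apply_castSucc (hw : ∀ i : Fin k, w i.castSucc.castSucc = (u i).succ.succ) :
    w (Fin.last k).castSucc = 0 ∧ w (Fin.last (k + 1)) = 1 ∨
      w (Fin.last k).castSucc = 1 ∧ w (Fin.last (k + 1)) = 0 := by
  have hval (i : Fin (k + 2)) (hi : k ≤ i) : w i = 0 ∨ w i = 1 := by
    induction h : w i using Fin.cases with
    | zero => exact .inl rfl
    | succ j =>
    induction j using Fin.cases with
    | zero => exact .inr rfl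
    | succ j =>
    have hij : w i = w (u.symm j).castSucc.castSucc := by rw [hw, Equiv.apply_symm_apply, h]
    have := congrArg Fin.val (w.injective hij)
    simp only [Fin.val_castSucc] at this
    omega
  have hne := w.injective.ne (Fin.castSucc_lt_last (Fin.last k)).ne
  have h₁ := hval (Fin.last k).castSucc (by simp)
  have h₂ := hval (Fin.last (k + 1)) (by simp)
  grind

theorem forall_fin_add_two_castSucc {P : Fin (k + 2) → Prop} :
    (∀ i, P i) ↔ (∀ i : Fin k, P i.castSucc.castSucc) ∧ P (Fin.last k).castSucc ∧
      P (Fin.last (k + 1)) := by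
  rw [Fin.forall_fin_succ', Fin.forall_fin_succ', and_assoc]

theorem forall_fin_add_two_succ {P : Fin (k + 2) → Prop} :
    (∀ i, P i) ↔ P 0 ∧ P 1 ∧ ∀ i : Fin k, P i.succ.succ := by
  rw [Fin.forall_fin_succ, Fin.forall_fin_succ]
  rfl

theorem blockForm_mem_permPattern_iff
    (hw : ∀ i : Fin k, w i.castSucc.castSucc = (u i).succ.succ) :
    blockForm X A c ∈ permPattern w ↔
      A ∈ permPattern u ∧ c ∈ pivotRows (w (Fin.last k).castSucc) := by
  have hsymm (j : Fin k) : w.symm j.succ.succ = (u.symm j).castSucc.castSucc := by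
    rw [Equiv.symm_apply_eq, hw, Equiv.apply_symm_apply]
  have hlast (n : ℕ) (i : Fin (n + 1)) : ¬Fin.last n < i := i.le_last.not_gt
  rcases apply_last_of_apply_castSucc hw with h | h
  · have h0 : w.symm 0 = (Fin.last k).castSucc := by rw [Equiv.symm_apply_eq, h.1]
    have h1 : w.symm 1 = Fin.last (k + 1) := by rw [Equiv.symm_apply_eq, h.2]
    rw [permPattern, mem_ofPred_eq, forall_fin_add_two_castSucc, forall_fin_add_two_castSucc]
    simp only [forall_fin_add_two_succ]
    simp [permPattern, pivotRows, blockForm, hw, hsymm, h, h0, h1, hlast, Complex.ext_iff]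
    tauto
  · have h0 : w.symm 0 = Fin.last (k + 1) := by rw [Equiv.symm_apply_eq, h.2]
    have h1 : w.symm 1 = (Fin.last k).castSucc := by rw [Equiv.symm_apply_eq, h.1]
    rw [permPattern, mem_ofPred_eq, forall_fin_add_two_castSucc, forall_fin_add_two_castSucc]
    simp only [forall_fin_add_two_succ]
    simp [permPattern, pivotRows, blockForm, hw, hsymm, h, h0, h1, hlast, sub_eq_zero,
      eq_comm (a := (1 : ℝ))]
    tauto

/-- The data of a matrix in block form: a left inverse of `blockForm`. -/
def blockData (M : Matrix (Fin (k + 2)) (Fin (k + 2)) ℝ) :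
    (Fin k → ℂ) × Matrix (Fin k) (Fin k) ℝ × ℂ :=
  (fun i ↦ M i.castSucc.castSucc 0 + M i.castSucc.castSucc 1 * I,
    M.submatrix (fun i ↦ i.castSucc.castSucc) fun j ↦ j.succ.succ,
    M (Fin.last k).castSucc 0 + M (Fin.last k).castSucc 1 * I)

theorem blockForm_blockData (hw : ∀ i : Fin k, w i.castSucc.castSucc = (u i).succ.succ)
    {M : Matrix (Fin (k + 2)) (Fin (k + 2)) ℝ} (hM : M ∈ permPattern w) :
    blockForm (blockData M).1 (blockData M).2.1 (blockData M).2.2 = M := by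
  obtain ⟨hone, hzero⟩ := hM
  ext i j
  revert i j
  rw [forall_fin_add_two_castSucc] at hone hzero ⊢
  simp only [forall_fin_add_two_succ] at hzero ⊢
  rcases apply_last_of_apply_castSucc hw with h | h
  · have h1 : w.symm 1 = Fin.last (k + 1) := by rw [Equiv.symm_apply_eq, h.2]
    have h0 : w.symm 0 = (Fin.last k).castSucc := by rw [Equiv.symm_apply_eq, h.1]
    simp_all [blockForm, blockData, Fin.one_lt_succ_succ]
  · have h0 : w.symm 0 = Fin.last (k + 1) := by rw [Equiv.symm_apply_eq, h.2]
    have h1 : w.symm 1 = (Fin.last k).castSucc := by rw [Equiv.symm_apply_eq, h.1]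
    simp_all [blockForm, blockData, Fin.one_lt_succ_succ]

theorem leadingMinorsNeZero_iff_of_mem_permPattern {w : Equiv.Perm (Fin (k + 1))}
    {M : Matrix (Fin (k + 1)) (Fin (k + 1)) ℝ} (hM : M ∈ permPattern w) :
    LeadingMinorsNeZero M ↔ ∀ i : Fin k, (leadingBlock M i.castSucc).det ≠ 0 := by
  have hdet : M.det ≠ 0 := fun h ↦ (submatrix_mem_upInv_of_mem_permPattern hM).2.ne_zero
    (by rw [det_permute', h, mul_zero])
  rw [LeadingMinorsNeZero, Fin.forall_fin_succ']
  exact and_iff_left hdet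

theorem HomotopyDiscrete.normalForms_of_blockForm
    (hw : ∀ i : Fin k, w i.castSucc.castSucc = (u i).succ.succ)
    (h : ∀ j : Fin (k + 2), HomotopyDiscrete {x : (Fin k → ℂ) × Matrix (Fin k) (Fin k) ℝ × ℂ |
      (x.2.1 ∈ permPattern u ∧ x.2.2 ∈ pivotRows j) ∧
        ∀ i : Fin (k + 1), (leadingBlock (blockForm x.1 x.2.1 x.2.2) i.castSucc).det ≠ 0}) :
    HomotopyDiscrete (normalForms w) := by
  refine (h (w (Fin.last k).castSucc)).of_retract blockData (fun x ↦ blockForm x.1 x.2.1 x.2.2)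
    ?_ ?_ (fun M hM ↦ ?_) (fun x hx ↦ ?_) fun M hM ↦ blockForm_blockData hw hM.1
  · unfold blockData
    fun_prop
  · unfold blockForm
    fun_prop
  · rw [mem_ofPred_eq, ← blockForm_mem_permPattern_iff hw, blockForm_blockData hw hM.1]
    exact ⟨hM.1, (leadingMinorsNeZero_iff_of_mem_permPattern hM.1).1 hM.2⟩
  · have hmem := (blockForm_mem_permPattern_iff (X := x.1) hw).2 hx.1
    exact ⟨hmem, (leadingMinorsNeZero_iff_of_mem_permPattern hmem).2 hx.2⟩

variable {m n : ℕ} {a : ℂ}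

theorem snoc_mem_chain_iff {v : Fin n → ℂ} {z : ℂ} :
    (Fin.snoc v z : Fin (n + 1) → ℂ) ∈ chain a (n + 1) ↔
      v ∈ chain a n ∧ cross (vecCons a v (Fin.last n)) z ≠ 0 := by
  have hcons : vecCons a (Fin.snoc v z : Fin (n + 1) → ℂ) = Fin.snoc (vecCons a v) z :=
    Fin.cons_snoc_eq_snoc_cons a v z
  simp [chain, Fin.forall_fin_succ', hcons]

theorem cons_mem_chain_iff {v : Fin n → ℂ} {z : ℂ} :
    vecCons z v ∈ chain a (n + 1) ↔ cross a z ≠ 0 ∧ v ∈ chain z n := by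
  simp [chain, Fin.forall_fin_succ]

theorem im_inv_im_mul {z : ℂ} (hz : z.im ≠ 0) : ((z.im⁻¹ : ℝ) * z).im = 1 := by
  rw [im_ofReal_mul, inv_mul_cancel₀ hz]

theorem real_mul_mem_chain {v : Fin n → ℂ} {t : ℝ} (ht : t ≠ 0) (hv : v ∈ chain a n) :
    v ∈ chain (t * a) n := by
  rcases n with - | n
  · exact fun i ↦ i.elim0
  · refine Fin.cases ?_ fun i ↦ hv i.succ
    simpa [cross_real_mul_left, ht] using hv 0

theorem HomotopyDiscrete.chain_pivotRows (ha : a ≠ 0) (j : Fin (k + 2)) :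
    HomotopyDiscrete {p : (Fin n → ℂ) × ℂ | (p.1 ∈ chain a n ∧ p.2 ∈ pivotRows j) ∧
      cross (vecCons a p.1 (Fin.last n)) p.2 ≠ 0} := by
  rcases pivotRows_eq_or j with hj | hj <;> rw [hj]
  · refine (sep_chain_im_last_ne_zero (n := n) ha).of_retract Prod.fst (fun v ↦ (v, 1))
      (by fun_prop) (by fun_prop) ?_ ?_ ?_
    · rintro ⟨v, c⟩ ⟨⟨hv, rfl⟩, h⟩
      exact ⟨hv, by simpa [cross] using h⟩
    · rintro v ⟨hv, h⟩
      exact ⟨⟨hv, rfl⟩, by simpa [cross] using h⟩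
    · rintro ⟨v, c⟩ ⟨⟨-, rfl⟩, -⟩
      rfl
  · refine (sep_chain_im_last_ne_zero (n := n + 1) ha).of_retract
      (fun p ↦ (Fin.snoc p.1 p.2 : Fin (n + 1) → ℂ))
      (fun v ↦ (Fin.init v, ((v (Fin.last n)).im⁻¹ : ℝ) * v (Fin.last n)))
      (by fun_prop) ?_ ?_ ?_ ?_
    · refine ContinuousOn.mono (s := {v : Fin (n + 1) → ℂ | (v (Fin.last n)).im ≠ 0}) ?_
        fun v ↦ And.right
      unfold Fin.init
      fun_prop (disch := exact fun _ ↦ id)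
    · rintro ⟨v, c⟩ ⟨⟨hv, hc : c.im = 1⟩, h⟩
      refine ⟨snoc_mem_chain_iff.2 ⟨hv, h⟩, ?_⟩
      change ((Fin.snoc v c : Fin (n + 1) → ℂ) (Fin.last n)).im ≠ 0
      simp [hc]
    · rintro v ⟨hv, him : (v (Fin.last n)).im ≠ 0⟩
      rw [← Fin.snoc_init_self v, snoc_mem_chain_iff] at hv
      refine ⟨⟨hv.1, im_inv_im_mul him⟩, ?_⟩
      rw [cross_real_mul_right]
      exact mul_ne_zero (inv_ne_zero him) hv.2
    · rintro ⟨v, c⟩ ⟨⟨-, hc : c.im = 1⟩, -⟩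
      simp [hc]

/-- The configurations of a chain `u` from `a`, a chain `v` of length `n + 1` from a vector `c ∈ C`,
a vector `z` and shear parameters `s`, `t` for which both sheared pairings of `z` with the ends of
the two chains are nonzero. -/
def shearedChains (a : ℂ) (m n : ℕ) (C : Set ℂ) :
    Set ((Fin m → ℂ) × (Fin (n + 1) → ℂ) × ℂ × ℝ × ℝ × ℂ) :=
  {(u, v, z, s, t, c) | (u ∈ chain a m ∧ v ∈ chain c (n + 1) ∧ c ∈ C) ∧
    cross (vecCons a u (Fin.last m)) (v (Fin.last n)) +
      s * cross (vecCons a u (Fin.last m)) z ≠ 0 ∧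
    cross (vecCons a u (Fin.last m)) (v (Fin.last n)) + t * cross z (v (Fin.last n)) ≠ 0}

theorem homotopyDiscrete_shearedChains_one (ha : a ≠ 0) :
    HomotopyDiscrete (shearedChains a m n {1}) := by
  refine (HomotopyDiscrete.chain_chain_cross_add_mul_ne_zero
    (m := m) (n := n + 1) ha one_ne_zero).of_retract
      (fun x ↦ (((x.1, x.2.1, x.2.2.1), x.2.2.2.1), x.2.2.2.2.1))
      (fun x ↦ (x.1.1.1, x.1.1.2.1, x.1.1.2.2, x.1.2, x.2, 1)) (by fun_prop) (by fun_prop) ?_ ?_ ?_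
  · rintro ⟨u, v, z, s, t, c⟩ ⟨⟨hu, hv, rfl⟩, h⟩
    exact ⟨⟨hu, hv⟩, h⟩
  · rintro ⟨⟨⟨u, v, z⟩, s⟩, t⟩ ⟨⟨hu, hv⟩, h⟩
    exact ⟨⟨hu, hv, rfl⟩, h⟩
  · rintro ⟨u, v, z, s, t, c⟩ ⟨⟨-, -, rfl⟩, -⟩
    rfl

theorem homotopyDiscrete_shearedChains_im_eq_one (ha : a ≠ 0) :
    HomotopyDiscrete (shearedChains a m n {c | c.im = 1}) := by
  refine (HomotopyDiscrete.chain_chain_cross_add_mul_ne_zero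
    (m := m) (n := n + 2) ha one_ne_zero).of_retract
      (fun x ↦ (((x.1, vecCons x.2.2.2.2.2 x.2.1, x.2.2.1), x.2.2.2.1), x.2.2.2.2.1))
      (fun x ↦ (x.1.1.1, Fin.tail x.1.1.2.1, x.1.1.2.2, x.1.2, x.2,
        ((x.1.1.2.1 0).im⁻¹ : ℝ) * x.1.1.2.1 0)) (by fun_prop) ?_ ?_ ?_ ?_
  · refine ContinuousOn.mono (s := {x | (x.1.1.2.1 0).im ≠ 0}) ?_
      fun x hx ↦ by simpa [cross_one_left] using hx.1.2 0
    unfold Fin.tail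
    fun_prop (disch := exact fun _ ↦ id)
  · rintro ⟨u, v, z, s, t, c⟩ ⟨⟨hu, hv, hc : c.im = 1⟩, h⟩
    exact ⟨⟨hu, cons_mem_chain_iff.2 ⟨by simp [cross_one_left, hc], hv⟩⟩, h⟩
  · rintro ⟨⟨⟨u, v, z⟩, s⟩, t⟩ ⟨⟨hu, hv⟩, h⟩
    rw [← Fin.cons_self_tail v] at hv
    obtain ⟨hc, hv⟩ := cons_mem_chain_iff.1 hv
    rw [cross_one_left] at hc
    exact ⟨⟨hu, real_mul_mem_chain (inv_ne_zero hc) hv, im_inv_im_mul hc⟩, h⟩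
  · rintro ⟨u, v, z, s, t, c⟩ ⟨⟨-, -, hc : c.im = 1⟩, -⟩
    simp [hc]

theorem homotopyDiscrete_shearedChains_pivotRows (ha : a ≠ 0) (j : Fin (k + 2)) :
    HomotopyDiscrete (shearedChains a m n (pivotRows j)) := by
  rcases pivotRows_eq_or j with hj | hj <;> rw [hj]
  · exact homotopyDiscrete_shearedChains_one ha
  · exact homotopyDiscrete_shearedChains_im_eq_one ha

end BlockForms

section Shears

open Complex

theorem sub_cross_div_cross_mul {x y r : ℂ} (h : cross y r ≠ 0) :
    x - (cross x r / cross y r : ℝ) * y = (cross y x / cross y r : ℝ) * r := by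
  have hre : cross y r * x.re - cross x r * y.re = cross y x * r.re := by simp only [cross]; ring
  have him : cross y r * x.im - cross x r * y.im = cross y x * r.im := by simp only [cross]; ring
  apply Complex.ext
  · simp only [sub_re, re_ofReal_mul]
    field_simp
    linear_combination hre
  · simp only [sub_im, im_ofReal_mul]
    field_simp
    linear_combination him

theorem cross_sub_cross_div_cross_mul_ne_zero {x y r z : ℂ} (hxy : cross x y ≠ 0)
    (hyr : cross y r ≠ 0) (hrz : cross r z ≠ 0) :
    cross (x - (cross x r / cross y r : ℝ) * y) z ≠ 0 := by
  rw [sub_cross_div_cross_mul hyr, cross_real_mul_left]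
  exact mul_ne_zero (div_ne_zero (cross_ne_zero_comm.1 hxy) hyr) hrz

theorem cross_mul_sub_eq_zero_iff {x y z : ℂ} {p : ℝ} :
    cross (p * y - x) z = 0 ↔ cross (x - p * y) z = 0 := by
  rw [← neg_sub, ← neg_one_mul, ← ofReal_one, ← ofReal_neg, cross_real_mul_left]
  simp

theorem mul_cross_sub_eq_zero_iff {x y z : ℂ} {p : ℝ} :
    p * cross y z - cross x z = 0 ↔ cross (x - p * y) z = 0 := by
  rw [← cross_mul_sub_eq_zero_iff]
  simp only [cross, sub_re, sub_im, re_ofReal_mul, im_ofReal_mul]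
  ring_nf

theorem cross_sub_mul_self (x y : ℂ) (p : ℝ) : cross y (x - p * y) = cross y x := by
  simp only [cross, sub_re, sub_im, re_ofReal_mul, im_ofReal_mul]
  ring

theorem cross_sub_mul_self_eq_zero_iff {x y : ℂ} {p : ℝ} :
    cross y (x - p * y) = 0 ↔ cross x y = 0 := by
  rw [cross_sub_mul_self, cross_swap, neg_eq_zero]

theorem cross_div_cross_sub_mul {x y : ℂ} (h : cross x y ≠ 0) (p : ℝ) :
    cross x (x - p * y) / cross y (x - p * y) = p := by
  have hcross : cross x (x - p * y) = p * cross y x := by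
    simp only [cross, sub_re, sub_im, re_ofReal_mul, im_ofReal_mul]
    ring
  rw [hcross, cross_sub_mul_self, mul_div_cancel_right₀]
  exact cross_ne_zero_comm.1 h

theorem cross_add_mul_left (x y z : ℂ) (t : ℝ) :
    cross (x + t * y) z = cross x z + t * cross y z := by
  simp only [cross, add_re, add_im, re_ofReal_mul, im_ofReal_mul]
  ring

theorem cross_sub_mul_add_mul_cross (x y z : ℂ) (q : ℝ) :
    cross x (y - q * z) + q * cross x z = cross x y := by
  simp only [cross, sub_re, sub_im, re_ofReal_mul, im_ofReal_mul]
  ring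

theorem mul_cross_sub_mul_cross_add_cross (x y z : ℂ) (p q : ℝ) :
    p * cross y z - q * cross x z + cross x y =
      cross x (y - q * z) + -p * cross z (y - q * z) := by
  simp only [cross, sub_re, sub_im, re_ofReal_mul, im_ofReal_mul]
  ring

theorem cross_neg_add_mul_add_mul (x y z c : ℂ) (p q s : ℝ) :
    cross (-x + s * y + (p - s * q) * z) c = cross c (x - p * z - s * (y - q * z)) := by
  simp only [cross, ← ofReal_mul, ← ofReal_sub, add_re, add_im, neg_re, neg_im, sub_re,
    sub_im, re_ofReal_mul, im_ofReal_mul]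
  ring

end Shears

section SmallCases

open Set

theorem forall_det_leadingBlock_blockForm_two_ne_zero_iff {X : Fin 2 → ℂ}
    {A : Matrix (Fin 2) (Fin 2) ℝ} {c : ℂ} :
    (∀ i : Fin 3, (leadingBlock (blockForm X A c) i.castSucc).det ≠ 0) ↔
      (X 0).re ≠ 0 ∧ cross (X 0) (X 1) ≠ 0 ∧ cross (A 0 0 * X 1 - A 1 0 * X 0) c ≠ 0 := by
  have h₀ : (leadingBlock (blockForm X A c) 0).det = (X 0).re := det_fin_one _
  have h₁ : (leadingBlock (blockForm X A c) 1).det = cross (X 0) (X 1) := det_fin_two _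
  have h₂ : (leadingBlock (blockForm X A c) 2).det = cross (A 0 0 * X 1 - A 1 0 * X 0) c := by
    have hblock : leadingBlock (blockForm X A c) 2 =
        !![(X 0).re, (X 0).im, A 0 0; (X 1).re, (X 1).im, A 1 0; c.re, c.im, 0] := by
      ext i j
      fin_cases i <;> fin_cases j <;> rfl
    rw [hblock]
    simp [cross, det_fin_three]
    ring
  rw [← h₀, ← h₁, ← h₂, Fin.forall_fin_succ, Fin.forall_fin_succ, Fin.forall_fin_one]
  rfl

theorem forall_det_leadingBlock_blockForm_three_ne_zero_iff {X : Fin 3 → ℂ}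
    {A : Matrix (Fin 3) (Fin 3) ℝ} {c : ℂ} :
    (∀ i : Fin 4, (leadingBlock (blockForm X A c) i.castSucc).det ≠ 0) ↔
      (X 0).re ≠ 0 ∧ cross (X 0) (X 1) ≠ 0 ∧
      A 0 0 * cross (X 1) (X 2) - A 1 0 * cross (X 0) (X 2) + A 2 0 * cross (X 0) (X 1) ≠ 0 ∧
      cross ((A 1 0 * A 2 1 - A 1 1 * A 2 0) * X 0 - (A 0 0 * A 2 1 - A 0 1 * A 2 0) * X 1 +
        (A 0 0 * A 1 1 - A 0 1 * A 1 0) * X 2) c ≠ 0 := by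
  have h₀ : (leadingBlock (blockForm X A c) 0).det = (X 0).re := det_fin_one _
  have h₁ : (leadingBlock (blockForm X A c) 1).det = cross (X 0) (X 1) := det_fin_two _
  have h₂ : (leadingBlock (blockForm X A c) 2).det =
      A 0 0 * cross (X 1) (X 2) - A 1 0 * cross (X 0) (X 2) + A 2 0 * cross (X 0) (X 1) := by
    have hblock : leadingBlock (blockForm X A c) 2 = !![(X 0).re, (X 0).im, A 0 0;
        (X 1).re, (X 1).im, A 1 0; (X 2).re, (X 2).im, A 2 0] := by
      ext i j
      fin_cases i <;> fin_cases j <;> rfl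
    rw [hblock, det_fin_three]
    simp [cross]
    ring
  have h₃ : (leadingBlock (blockForm X A c) 3).det =
      cross ((A 1 0 * A 2 1 - A 1 1 * A 2 0) * X 0 - (A 0 0 * A 2 1 - A 0 1 * A 2 0) * X 1 +
        (A 0 0 * A 1 1 - A 0 1 * A 1 0) * X 2) c := by
    have hblock : leadingBlock (blockForm X A c) 3 = !![(X 0).re, (X 0).im, A 0 0, A 0 1;
        (X 1).re, (X 1).im, A 1 0, A 1 1; (X 2).re, (X 2).im, A 2 0, A 2 1; c.re, c.im, 0, 0] := by
      ext i j
      fin_cases i <;> fin_cases j <;> rfl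
    rw [hblock, det_succ_row _ 3]
    simp [cross, Fin.sum_univ_succ, det_fin_three, Fin.succAbove]
    ring
  rw [← h₃, ← h₂, ← h₁, ← h₀, Fin.forall_fin_succ, Fin.forall_fin_succ, Fin.forall_fin_succ,
    Fin.forall_fin_one]
  rfl

theorem mem_permPattern_iff_eq {m : ℕ} {u : Equiv.Perm (Fin m)} {A : Matrix (Fin m) (Fin m) ℝ} :
    A ∈ permPattern u ↔
      A = of fun i j ↦ if j = u i then 1 else if u i < j ∨ u.symm j < i then 0 else A i j := by
  rw [← Matrix.ext_iff]
  refine ⟨fun ⟨hone, hzero⟩ i j ↦ ?_, fun h ↦ ⟨fun i ↦ by simp [h i (u i)], fun i j hij ↦ ?_⟩⟩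
  · rw [of_apply]
    split_ifs with h h'
    exacts [h ▸ hone i, hzero i j h', rfl]
  · have hj : j ≠ u i := by
      rintro rfl
      simp at hij
    rw [h i j, of_apply, if_neg hj, if_pos hij]

theorem mem_permPattern_swap_one_two_iff {A : Matrix (Fin 3) (Fin 3) ℝ} :
    A ∈ permPattern (Equiv.swap 1 2) ↔ A = !![1, 0, 0; 0, A 1 1, 1; 0, 1, 0] := by
  rw [mem_permPattern_iff_eq]
  exact Eq.congr_right (by ext i j; fin_cases i <;> fin_cases j <;> rfl)

theorem mem_permPattern_finRotate_inv_iff {A : Matrix (Fin 3) (Fin 3) ℝ} :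
    A ∈ permPattern (finRotate 3)⁻¹ ↔ A = !![A 0 0, A 0 1, 1; 1, 0, 0; 0, 1, 0] := by
  rw [mem_permPattern_iff_eq]
  exact Eq.congr_right (by ext i j; fin_cases i <;> fin_cases j <;> rfl)

theorem mem_permPattern_finRotate_iff {A : Matrix (Fin 3) (Fin 3) ℝ} :
    A ∈ permPattern (finRotate 3) ↔ A = !![A 0 0, 1, 0; A 1 0, 0, 1; 1, 0, 0] := by
  rw [mem_permPattern_iff_eq]
  exact Eq.congr_right (by ext i j; fin_cases i <;> fin_cases j <;> rfl)

theorem mem_permPattern_revPerm_iff {A : Matrix (Fin 3) (Fin 3) ℝ} :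
    A ∈ permPattern Fin.revPerm ↔ A = !![A 0 0, A 0 1, 1; A 1 0, 1, 0; 1, 0, 0] := by
  rw [mem_permPattern_iff_eq]
  exact Eq.congr_right (by ext i j; fin_cases i <;> fin_cases j <;> rfl)

theorem permPattern_one {m : ℕ} : permPattern (1 : Equiv.Perm (Fin m)) = {1} := by
  ext A
  refine ⟨fun ⟨hone, hzero⟩ ↦ ?_, ?_⟩
  · ext i j
    rcases lt_trichotomy i j with h | rfl | h
    · rw [hzero i j (.inl h), one_apply_ne h.ne]
    · rw [one_apply_eq]; exact hone i
    · rw [hzero i j (.inr h), one_apply_ne h.ne']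
  · rintro rfl
    exact ⟨fun i ↦ one_apply_eq i, fun i j h ↦ one_apply_ne (h.elim ne_of_lt ne_of_gt)⟩

theorem HomotopyDiscrete.normalForms_four_of_blockForm
    {w : Equiv.Perm (Fin 4)} {u : Equiv.Perm (Fin 2)}
    (hw : ∀ i : Fin 2, w i.castSucc.castSucc = (u i).succ.succ)
    (h : ∀ j : Fin 4, HomotopyDiscrete {(X, A, c) : (Fin 2 → ℂ) × Matrix (Fin 2) (Fin 2) ℝ × ℂ |
      (A ∈ permPattern u ∧ c ∈ pivotRows j) ∧
        (X 0).re ≠ 0 ∧ cross (X 0) (X 1) ≠ 0 ∧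
        cross (A 0 0 * X 1 - A 1 0 * X 0) c ≠ 0}) :
    HomotopyDiscrete (normalForms w) :=
  .normalForms_of_blockForm hw fun j ↦ (h j).congr_set fun _ ↦
    and_congr_right' forall_det_leadingBlock_blockForm_two_ne_zero_iff

theorem HomotopyDiscrete.normalForms_five_of_blockForm
    {w : Equiv.Perm (Fin 5)} {u : Equiv.Perm (Fin 3)}
    (hw : ∀ i : Fin 3, w i.castSucc.castSucc = (u i).succ.succ)
    (h : ∀ j : Fin 5, HomotopyDiscrete {(X, A, c) : (Fin 3 → ℂ) × Matrix (Fin 3) (Fin 3) ℝ × ℂ |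
      (A ∈ permPattern u ∧ c ∈ pivotRows j) ∧
        (X 0).re ≠ 0 ∧ cross (X 0) (X 1) ≠ 0 ∧
        A 0 0 * cross (X 1) (X 2) - A 1 0 * cross (X 0) (X 2) + A 2 0 * cross (X 0) (X 1) ≠ 0 ∧
        cross ((A 1 0 * A 2 1 - A 1 1 * A 2 0) * X 0 - (A 0 0 * A 2 1 - A 0 1 * A 2 0) * X 1 +
          (A 0 0 * A 1 1 - A 0 1 * A 1 0) * X 2) c ≠ 0}) :
    HomotopyDiscrete (normalForms w) :=
  .normalForms_of_blockForm hw fun j ↦ (h j).congr_set fun _ ↦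
    and_congr_right' forall_det_leadingBlock_blockForm_three_ne_zero_iff

theorem homotopyDiscrete_normalForms_four_of_one {w : Equiv.Perm (Fin 4)}
    (hw : ∀ i : Fin 2, w i.castSucc.castSucc = ((1 : Equiv.Perm (Fin 2)) i).succ.succ) :
    HomotopyDiscrete (normalForms w) := by
  refine .normalForms_four_of_blockForm hw fun j ↦
    (HomotopyDiscrete.chain_pivotRows (n := 2) Complex.I_ne_zero j).of_retract
      (fun x ↦ (x.1, x.2.2)) (fun p ↦ (p.1, 1, p.2)) (by fun_prop) (by fun_prop) ?_ ?_ ?_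
  · rintro ⟨X, A, c⟩ ⟨⟨hA, hc⟩, h⟩
    obtain rfl : A = 1 := by rwa [permPattern_one] at hA
    simpa [chain, Fin.forall_fin_succ, hc, cross_I_ne_zero_iff, and_assoc] using h
  · rintro ⟨v, c⟩ ⟨⟨hv, hc⟩, h⟩
    exact ⟨⟨by simp [permPattern_one], hc⟩, cross_I_ne_zero_iff.1 (hv 0), hv 1, by simpa using h⟩
  · rintro ⟨X, A, c⟩ ⟨⟨hA, hc⟩, h⟩
    obtain rfl : A = 1 := by rwa [permPattern_one] at hA
    rfl

theorem mem_permPattern_swap_zero_one_iff {A : Matrix (Fin 2) (Fin 2) ℝ} :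
    A ∈ permPattern (Equiv.swap 0 1) ↔ A = !![A 0 0, 1; 1, 0] := by
  simp [permPattern, Fin.forall_fin_succ, ← Matrix.ext_iff, and_assoc]

theorem homotopyDiscrete_normalForms_four_of_swap {w : Equiv.Perm (Fin 4)}
    (hw : ∀ i : Fin 2,
      w i.castSucc.castSucc = ((Equiv.swap 0 1 : Equiv.Perm (Fin 2)) i).succ.succ) :
    HomotopyDiscrete (normalForms w) := by
  refine .normalForms_four_of_blockForm hw fun j ↦
    (HomotopyDiscrete.chain_pivotRows (n := 3) Complex.I_ne_zero j).of_retract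
      (fun x ↦ (![x.1 0, x.1 1, x.1 0 - x.2.1 0 0 * x.1 1], x.2.2))
      (fun v ↦ (![v.1 0, v.1 1], !![cross (v.1 0) (v.1 2) / cross (v.1 1) (v.1 2), 1; 1, 0], v.2))
      (by fun_prop) ?_ ?_ ?_ ?_
  · refine ContinuousOn.mono (s := {v : (Fin 3 → ℂ) × ℂ | cross (v.1 1) (v.1 2) ≠ 0}) ?_
      fun v hv ↦ hv.1.1 2
    fun_prop (disch := exact fun _ ↦ id)
  · rintro ⟨X, A, c⟩ ⟨⟨hA, hc⟩, h⟩
    rw [mem_permPattern_swap_zero_one_iff] at hA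
    rw [hA] at h
    simpa [chain, Fin.forall_fin_succ, hc, cross_I_ne_zero_iff, cross_sub_mul_self_eq_zero_iff,
      cross_mul_sub_eq_zero_iff, and_assoc] using h
  · rintro ⟨v, c⟩ ⟨⟨hv, hc⟩, h⟩
    refine ⟨⟨mem_permPattern_swap_zero_one_iff.2 rfl, hc⟩, cross_I_ne_zero_iff.1 (hv 0), hv 1, ?_⟩
    simpa [cross_mul_sub_eq_zero_iff, -Complex.ofReal_div]
      using cross_sub_cross_div_cross_mul_ne_zero (hv 1) (hv 2) h
  · rintro ⟨X, A, c⟩ ⟨⟨hA, hc⟩, h⟩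
    rw [mem_permPattern_swap_zero_one_iff] at hA
    refine Prod.ext (FinVec.etaExpand_eq X) (Prod.ext ?_ rfl)
    simpa [cross_div_cross_sub_mul h.2.1] using hA.symm

theorem homotopyDiscrete_normalForms_five_of_one {w : Equiv.Perm (Fin 5)}
    (hw : ∀ i : Fin 3, w i.castSucc.castSucc = ((1 : Equiv.Perm (Fin 3)) i).succ.succ) :
    HomotopyDiscrete (normalForms w) := by
  refine .normalForms_five_of_blockForm hw fun j ↦
    (HomotopyDiscrete.chain_pivotRows (n := 3) Complex.I_ne_zero j).of_retract
      (fun x ↦ (x.1, x.2.2)) (fun v ↦ (v.1, 1, v.2)) (by fun_prop) (by fun_prop) ?_ ?_ ?_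
  · rintro ⟨X, A, c⟩ ⟨⟨hA, hc⟩, h⟩
    obtain rfl : A = 1 := by rwa [permPattern_one] at hA
    simpa [chain, Fin.forall_fin_succ, hc, cross_I_ne_zero_iff, and_assoc] using h
  · rintro ⟨v, c⟩ ⟨⟨hv, hc⟩, h⟩
    exact ⟨⟨by simp [permPattern_one], hc⟩, cross_I_ne_zero_iff.1 (hv 0), hv 1,
      by simpa using hv 2, by simpa using h⟩
  · rintro ⟨X, A, c⟩ ⟨⟨hA, hc⟩, h⟩
    obtain rfl : A = 1 := by rwa [permPattern_one] at hA
    rfl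

theorem homotopyDiscrete_normalForms_five_of_swap {w : Equiv.Perm (Fin 5)}
    (hw : ∀ i : Fin 3,
      w i.castSucc.castSucc = ((Equiv.swap 1 2 : Equiv.Perm (Fin 3)) i).succ.succ) :
    HomotopyDiscrete (normalForms w) := by
  refine .normalForms_five_of_blockForm hw fun j ↦
    (HomotopyDiscrete.chain_pivotRows (n := 4) Complex.I_ne_zero j).of_retract
      (fun x ↦ (![x.1 0, x.1 1, x.1 2, x.1 1 - x.2.1 1 1 * x.1 2], x.2.2))
      (fun v ↦ (![v.1 0, v.1 1, v.1 2],
        !![1, 0, 0; 0, cross (v.1 1) (v.1 3) / cross (v.1 2) (v.1 3), 1; 0, 1, 0], v.2))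
      (by fun_prop) ?_ ?_ ?_ ?_
  · refine ContinuousOn.mono (s := {v : (Fin 4 → ℂ) × ℂ | cross (v.1 2) (v.1 3) ≠ 0}) ?_
      fun v hv ↦ hv.1.1 3
    fun_prop (disch := exact fun _ ↦ id)
  · rintro ⟨X, A, c⟩ ⟨⟨hA, hc⟩, h⟩
    rw [mem_permPattern_swap_one_two_iff] at hA
    rw [hA] at h
    simpa [chain, Fin.forall_fin_succ, hc, cross_I_ne_zero_iff, cross_sub_mul_self_eq_zero_iff,
      neg_add_eq_sub, cross_mul_sub_eq_zero_iff, and_assoc] using h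
  · rintro ⟨v, c⟩ ⟨⟨hv, hc⟩, h⟩
    refine ⟨⟨mem_permPattern_swap_one_two_iff.2 rfl, hc⟩, cross_I_ne_zero_iff.1 (hv 0), hv 1,
      ?_, ?_⟩
    · simpa using hv 2
    · simpa [neg_add_eq_sub, cross_mul_sub_eq_zero_iff, -Complex.ofReal_div]
        using cross_sub_cross_div_cross_mul_ne_zero (hv 2) (hv 3) h
  · rintro ⟨X, A, c⟩ ⟨⟨hA, hc⟩, h⟩
    rw [mem_permPattern_swap_one_two_iff] at hA
    rw [hA] at h
    have hyz : cross (X 1) (X 2) ≠ 0 := by simpa using h.2.2.1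
    refine Prod.ext (FinVec.etaExpand_eq X) (Prod.ext ?_ rfl)
    simpa [cross_div_cross_sub_mul hyz] using hA.symm

theorem homotopyDiscrete_normalForms_five_of_finRotate_inv {w : Equiv.Perm (Fin 5)}
    (hw : ∀ i : Fin 3, w i.castSucc.castSucc = ((finRotate 3)⁻¹ i).succ.succ) :
    HomotopyDiscrete (normalForms w) := by
  refine .normalForms_five_of_blockForm hw fun j ↦
    (HomotopyDiscrete.chain_pivotRows (n := 5) Complex.I_ne_zero j).of_retract
      (fun x ↦ (![x.1 0, x.1 1, x.1 0 - x.2.1 0 0 * x.1 1, x.1 2,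
        x.1 0 - x.2.1 0 0 * x.1 1 - x.2.1 0 1 * x.1 2], x.2.2))
      (fun v ↦ (![v.1 0, v.1 1, v.1 3], !![cross (v.1 0) (v.1 2) / cross (v.1 1) (v.1 2),
        cross (v.1 0 - (cross (v.1 0) (v.1 2) / cross (v.1 1) (v.1 2) : ℝ) * v.1 1) (v.1 4) /
          cross (v.1 3) (v.1 4), 1; 1, 0, 0; 0, 1, 0], v.2))
      (by fun_prop) ?_ ?_ ?_ ?_
  · refine ContinuousOn.mono (s := {v : (Fin 5 → ℂ) × ℂ | cross (v.1 1) (v.1 2) ≠ 0 ∧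
      cross (v.1 3) (v.1 4) ≠ 0}) ?_ fun v hv ↦ ⟨hv.1.1 2, hv.1.1 4⟩
    have hr : ∀ v ∈ {v : (Fin 5 → ℂ) × ℂ | cross (v.1 1) (v.1 2) ≠ 0 ∧ cross (v.1 3) (v.1 4) ≠ 0},
      cross (v.1 1) (v.1 2) ≠ 0 := fun _ ↦ And.left
    have hs : ∀ v ∈ {v : (Fin 5 → ℂ) × ℂ | cross (v.1 1) (v.1 2) ≠ 0 ∧ cross (v.1 3) (v.1 4) ≠ 0},
      cross (v.1 3) (v.1 4) ≠ 0 := fun _ ↦ And.right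
    fun_prop (disch := assumption)
  · rintro ⟨X, A, c⟩ ⟨⟨hA, hc⟩, h⟩
    rw [mem_permPattern_finRotate_inv_iff] at hA
    rw [hA] at h
    simpa [chain, Fin.forall_fin_succ, hc, cross_I_ne_zero_iff, cross_sub_mul_self_eq_zero_iff,
      mul_cross_sub_eq_zero_iff, ← sub_eq_add_neg, and_assoc] using h
  · rintro ⟨v, c⟩ ⟨⟨hv, hc⟩, h⟩
    have hrz := cross_sub_cross_div_cross_mul_ne_zero (hv 1) (hv 2) (hv 3)
    have hsc := cross_sub_cross_div_cross_mul_ne_zero hrz (hv 4) h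
    refine ⟨⟨mem_permPattern_finRotate_inv_iff.2 rfl, hc⟩, cross_I_ne_zero_iff.1 (hv 0), hv 1,
      ?_, ?_⟩
    · simpa [mul_cross_sub_eq_zero_iff, -Complex.ofReal_div] using hrz
    · simpa [← sub_eq_add_neg, -Complex.ofReal_div] using hsc
  · rintro ⟨X, A, c⟩ ⟨⟨hA, hc⟩, h⟩
    rw [mem_permPattern_finRotate_inv_iff] at hA
    rw [hA] at h
    have hrz : cross (X 0 - A 0 0 * X 1) (X 2) ≠ 0 := by
      simpa [mul_cross_sub_eq_zero_iff] using h.2.2.1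
    refine Prod.ext (FinVec.etaExpand_eq X) (Prod.ext ?_ rfl)
    simpa [cross_div_cross_sub_mul h.2.1, cross_div_cross_sub_mul hrz, -Complex.ofReal_div]
      using hA.symm

theorem homotopyDiscrete_normalForms_five_of_finRotate {w : Equiv.Perm (Fin 5)}
    (hw : ∀ i : Fin 3, w i.castSucc.castSucc = (finRotate 3 i).succ.succ) :
    HomotopyDiscrete (normalForms w) := by
  refine .normalForms_five_of_blockForm hw fun j ↦
    (homotopyDiscrete_shearedChains_pivotRows (m := 1) (n := 0) Complex.I_ne_zero j).of_retract
      (fun x ↦ (![x.1 0], ![x.1 1 - x.2.1 1 0 * x.1 2], x.1 2, x.2.1 1 0, -x.2.1 0 0, x.2.2))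
      (fun y ↦ (![y.1 0, y.2.1 0 + y.2.2.2.1 * y.2.2.1, y.2.2.1],
        !![-y.2.2.2.2.1, 1, 0; y.2.2.2.1, 0, 1; 1, 0, 0], y.2.2.2.2.2))
      (by fun_prop) (by fun_prop) ?_ ?_ ?_
  · rintro ⟨X, A, c⟩ ⟨⟨hA, hc⟩, hx, hxy, hdet, hvc⟩
    rw [mem_permPattern_finRotate_iff] at hA
    rw [hA] at hdet hvc
    refine ⟨⟨Fin.forall_fin_one.2 (cross_I_ne_zero_iff.2 hx), Fin.forall_fin_one.2 ?_, hc⟩, ?_, ?_⟩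
    · rw [cross_ne_zero_comm]
      simpa [← sub_eq_add_neg] using hvc
    · exact (cross_sub_mul_add_mul_cross ..).trans_ne hxy
    · exact (mul_cross_sub_mul_cross_add_cross ..).symm.trans_ne (by simpa using hdet)
  · rintro ⟨u, v, z, s, t, c⟩ ⟨⟨hu, hv, hc⟩, hs, ht⟩
    refine ⟨⟨mem_permPattern_finRotate_iff.2 rfl, hc⟩, cross_I_ne_zero_iff.1 (hu 0), ?_, ?_, ?_⟩
    · refine (cross_sub_mul_add_mul_cross _ _ z s).symm.trans_ne ?_
      simpa using hs
    · have hdet := mul_cross_sub_mul_cross_add_cross (u 0) (v 0 + s * z) z (-t) s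
      rw [add_sub_cancel_right, neg_neg] at hdet
      simpa using hdet.trans_ne ht
    · simpa using cross_ne_zero_comm.1 (hv 0)
  · rintro ⟨X, A, c⟩ ⟨⟨hA, hc⟩, -⟩
    rw [mem_permPattern_finRotate_iff] at hA
    refine Prod.ext ?_ (Prod.ext ?_ rfl)
    · exact (congrArg (![X 0, ·, X 2]) (sub_add_cancel _ _)).trans (FinVec.etaExpand_eq X)
    · simpa using hA.symm

theorem homotopyDiscrete_pivotRows_cross_sub_mul_ne_zero {k : ℕ} (j : Fin (k + 2)) :
    HomotopyDiscrete {(x, v, z, s, t, r, c) : ℂ × ℂ × ℂ × ℝ × ℝ × ℝ × ℂ | c ∈ pivotRows j ∧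
      x.re ≠ 0 ∧ cross x v + s * cross x z ≠ 0 ∧ cross x v + t * cross z v ≠ 0 ∧
      cross c (x + t * z - r * v) ≠ 0} := by
  refine (homotopyDiscrete_shearedChains_pivotRows (m := 1) (n := 1) Complex.I_ne_zero j).of_retract
    (fun y ↦ (![y.1], ![y.1 + y.2.2.2.2.1 * y.2.2.1 - y.2.2.2.2.2.1 * y.2.1, y.2.1], y.2.2.1,
      y.2.2.2.1, y.2.2.2.2.1, y.2.2.2.2.2.2))
    (fun y ↦ (y.1 0, y.2.1 1, y.2.2.1, y.2.2.2.1, y.2.2.2.2.1,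
      cross (y.1 0 + y.2.2.2.2.1 * y.2.2.1) (y.2.1 0) / cross (y.2.1 1) (y.2.1 0),
      y.2.2.2.2.2))
    (by fun_prop) ?_ ?_ ?_ ?_
  · refine ContinuousOn.mono (s := {y : (Fin 1 → ℂ) × (Fin 2 → ℂ) × ℂ × ℝ × ℝ × ℂ |
      cross (y.2.1 1) (y.2.1 0) ≠ 0}) ?_ fun y hy ↦ cross_ne_zero_comm.1 (hy.1.2.1 1)
    fun_prop (disch := exact fun _ ↦ id)
  · rintro ⟨x, v, z, s, t, r, c⟩ ⟨hc, hx, hs, ht, hr⟩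
    refine ⟨⟨Fin.forall_fin_one.2 (cross_I_ne_zero_iff.2 hx), Fin.forall_fin_two.2 ⟨hr, ?_⟩, hc⟩,
      hs, ht⟩
    change cross (x + t * z - r * v) v ≠ 0
    rwa [cross_ne_zero_comm, cross_sub_mul_self, cross_ne_zero_comm, cross_add_mul_left]
  · rintro ⟨u, v, z, s, t, c⟩ ⟨⟨hu, hv, hc⟩, hs, ht⟩
    refine ⟨hc, cross_I_ne_zero_iff.1 (hu 0), hs, ht, cross_ne_zero_comm.1 ?_⟩
    exact cross_sub_cross_div_cross_mul_ne_zero ((cross_add_mul_left ..).trans_ne ht)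
      (cross_ne_zero_comm.1 (hv 1)) (cross_ne_zero_comm.1 (hv 0))
  · rintro ⟨x, v, z, s, t, r, c⟩ ⟨-, -, -, ht, -⟩
    have hr := cross_div_cross_sub_mul ((cross_add_mul_left ..).trans_ne ht) r
    simpa using hr

theorem homotopyDiscrete_normalForms_five_of_revPerm {w : Equiv.Perm (Fin 5)}
    (hw : ∀ i : Fin 3, w i.castSucc.castSucc = (Fin.revPerm i).succ.succ) :
    HomotopyDiscrete (normalForms w) := by
  refine .normalForms_five_of_blockForm hw fun j ↦
    (homotopyDiscrete_pivotRows_cross_sub_mul_ne_zero j).of_retract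
      (fun x ↦ (x.1 0, x.1 1 - x.2.1 1 0 * x.1 2, x.1 2, x.2.1 1 0, -x.2.1 0 0, x.2.1 0 1, x.2.2))
      (fun y ↦ (![y.1, y.2.1 + y.2.2.2.1 * y.2.2.1, y.2.2.1],
        !![-y.2.2.2.2.1, y.2.2.2.2.2.1, 1; y.2.2.2.1, 1, 0; 1, 0, 0], y.2.2.2.2.2.2))
      (by fun_prop) (by fun_prop) ?_ ?_ ?_
  · rintro ⟨X, A, c⟩ ⟨⟨hA, hc⟩, hx, hxy, hdet, hrc⟩
    rw [mem_permPattern_revPerm_iff] at hA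
    rw [hA] at hdet hrc
    refine ⟨hc, hx, (cross_sub_mul_add_mul_cross ..).trans_ne hxy, ?_, ?_⟩
    · exact (mul_cross_sub_mul_cross_add_cross ..).symm.trans_ne (by simpa using hdet)
    · have hcross := cross_neg_add_mul_add_mul (X 0) (X 1) (X 2) c (A 0 0) (A 1 0) (A 0 1)
      simpa [sub_eq_add_neg] using hcross.symm.trans_ne (by simpa using hrc)
  · rintro ⟨x, v, z, s, t, r, c⟩ ⟨hc, hx, hs, ht, hr⟩
    refine ⟨⟨mem_permPattern_revPerm_iff.2 rfl, hc⟩, hx, ?_, ?_, ?_⟩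
    · refine (cross_sub_mul_add_mul_cross _ _ z s).symm.trans_ne ?_
      simpa using hs
    · have hdet := mul_cross_sub_mul_cross_add_cross x (v + s * z) z (-t) s
      rw [add_sub_cancel_right, neg_neg] at hdet
      simpa using hdet.trans_ne ht
    · have hcross := cross_neg_add_mul_add_mul x (v + s * z) z c (-t) s r
      rw [add_sub_cancel_right, Complex.ofReal_neg, neg_mul, sub_neg_eq_add] at hcross
      simpa using hcross.trans_ne hr
  · rintro ⟨X, A, c⟩ ⟨⟨hA, hc⟩, -⟩
    rw [mem_permPattern_revPerm_iff] at hA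
    refine Prod.ext ?_ (Prod.ext ?_ rfl)
    · exact (congrArg (![X 0, ·, X 2]) (sub_add_cancel _ _)).trans (FinVec.etaExpand_eq X)
    · simpa using hA.symm

end SmallCases

section SmallDimensions

theorem HomotopyDiscrete.normalForms_of_or_inv_or_revConj {n : ℕ} {P : Equiv.Perm (Fin n) → Prop}
    (hP : ∀ w, P w → HomotopyDiscrete (normalForms w)) {w : Equiv.Perm (Fin n)}
    (hw : P w ∨ P w⁻¹ ∨ P (revConj w) ∨ P (revConj w⁻¹)) : HomotopyDiscrete (normalForms w) := by
  rcases hw with h | h | h | h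
  · exact hP w h
  · exact (hP _ h).normalForms_of_inv
  · exact (hP _ h).normalForms_of_revConj
  · exact (hP _ h).normalForms_of_revConj.normalForms_of_inv

theorem homotopyDiscrete_normalForms_two (w : Equiv.Perm (Fin 2)) :
    HomotopyDiscrete (normalForms w) := by
  obtain ⟨p, hp, hwp⟩ : ∃ p, p ≤ 1 ∧ w p ≤ 1 := by decide +revert
  exact .normalForms_of_pivot_corner hp hwp fun w' ↦ .normalForms_of_subsingleton (n := 1) w'

theorem homotopyDiscrete_normalForms_three (w : Equiv.Perm (Fin 3)) :
    HomotopyDiscrete (normalForms w) := by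
  obtain ⟨p, hp, hwp⟩ : ∃ p, p ≤ 1 ∧ w p ≤ 1 := by decide +revert
  exact .normalForms_of_pivot_corner hp hwp homotopyDiscrete_normalForms_two

theorem homotopyDiscrete_normalForms_four (w : Equiv.Perm (Fin 4)) :
    HomotopyDiscrete (normalForms w) := by
  refine .normalForms_of_or_inv_or_revConj (P := fun w ↦ (∃ p, p ≤ 1 ∧ w p ≤ 1) ∨
    ∃ u ∈ ({1, Equiv.swap 0 1} : Finset (Equiv.Perm (Fin 2))),
      ∀ i : Fin 2, w i.castSucc.castSucc = (u i).succ.succ) ?_ (by decide +kernel +revert)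
  rintro w (⟨p, hp, hwp⟩ | ⟨u, hu, hwu⟩)
  · exact .normalForms_of_pivot_corner hp hwp homotopyDiscrete_normalForms_three
  · simp only [Finset.mem_insert, Finset.mem_singleton] at hu
    rcases hu with rfl | rfl
    · exact homotopyDiscrete_normalForms_four_of_one hwu
    · exact homotopyDiscrete_normalForms_four_of_swap hwu

theorem homotopyDiscrete_normalForms_five (w : Equiv.Perm (Fin 5)) :
    HomotopyDiscrete (normalForms w) := by
  refine .normalForms_of_or_inv_or_revConj (P := fun w ↦ (∃ p, p ≤ 1 ∧ w p ≤ 1) ∨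
    ∃ u ∈ ({1, Equiv.swap 1 2, (finRotate 3)⁻¹, finRotate 3, Fin.revPerm} :
        Finset (Equiv.Perm (Fin 3))),
      ∀ i : Fin 3, w i.castSucc.castSucc = (u i).succ.succ) ?_ (by decide +kernel +revert)
  rintro w (⟨p, hp, hwp⟩ | ⟨u, hu, hwu⟩)
  · exact .normalForms_of_pivot_corner hp hwp homotopyDiscrete_normalForms_four
  · simp only [Finset.mem_insert, Finset.mem_singleton] at hu
    rcases hu with rfl | rfl | rfl | rfl | rfl
    · exact homotopyDiscrete_normalForms_five_of_one hwu
    · exact homotopyDiscrete_normalForms_five_of_swap hwu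
    · exact homotopyDiscrete_normalForms_five_of_finRotate_inv hwu
    · exact homotopyDiscrete_normalForms_five_of_finRotate hwu
    · exact homotopyDiscrete_normalForms_five_of_revPerm hwu

end SmallDimensions

/-- for every permutation `σ ∈ S₅`, every connected component of
`BL_σ ⊂ Lo¹₅` is contractible. -/
theorem stmt8 (σ : Equiv.Perm (Fin 5)) :
    ∀ L : ↥(BL 5 σ), ContractibleSpace ↥(connectedComponent L) :=
  (homotopyDiscrete_BL_iff.2
    (homotopyDiscrete_normalForms_five σ)).contractibleSpace_connectedComponent
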